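/- For any irreducible complex affine variety X, the group of units O(X)^× of the coordinate ring is isomorphic to ℂ* × ℤ^m for some m ≥ 0 (Samuel's Lemma); moreover m is at most the rank of H¹(X, ℤ). -/

import Mathlib

open scoped Cardinal

/-- The universal monic polynomial of degree `d`. -/
noncomputable def monicEval (d : ℕ) (p : (Fin d → ℂ) × ℂ) : ℂ :=
  p.2 ^ d + ∑ i : Fin d, p.1 i * p.2 ^ (i : ℕ)

lemma contDiff_monicEval (d : ℕ) : ContDiff ℂ 1 (monicEval d) := by
  unfold monicEval
  fun_prop

lemma norm_le_of_norm_monicEval_le {d : ℕ} {M : ℝ} {v : Fin d → ℂ} {z : ℂ} (hv : ‖v‖ ≤ M)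
    (hd : 0 < d) (hw : ‖monicEval d (v, z)‖ ≤ M) : ‖z‖ ≤ 1 + (d + 1) * M := by
  have hM : 0 ≤ M := (norm_nonneg _).trans hv
  by_contra! h
  have h1 : 1 ≤ ‖z‖ := by nlinarith [mul_nonneg (by positivity : (0:ℝ) ≤ d + 1) hM]
  obtain ⟨e, rfl⟩ : ∃ e, d = e + 1 := ⟨d - 1, by omega⟩
  have h2 : z ^ (e + 1) = monicEval (e + 1) (v, z) - ∑ i : Fin (e + 1), v i * z ^ (i : ℕ) := by
    simp [monicEval]
  have h3 : ‖z‖ ^ (e + 1) ≤ M * ‖z‖ ^ e + ∑ i : Fin (e + 1), M * ‖z‖ ^ e := by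
    rw [← norm_pow, h2]
    refine (norm_sub_le _ _).trans (add_le_add ?_ ((norm_sum_le _ _).trans ?_))
    · exact hw.trans (le_mul_of_one_le_right hM (one_le_pow₀ h1))
    · refine Finset.sum_le_sum fun i _ => ?_
      rw [norm_mul, norm_pow]
      exact mul_le_mul ((norm_le_pi_norm v i).trans hv)
        (pow_le_pow_right₀ h1 (by omega)) (by positivity) hM
  rw [Finset.sum_const, Finset.card_univ, Fintype.card_fin, nsmul_eq_mul, pow_succ] at h3
  have h4 : 0 < ‖z‖ ^ e := by positivity
  have h5 : ‖z‖ ≤ M + (e + 1) * M := by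
    refine le_of_mul_le_mul_left ?_ h4
    push_cast at h3
    linarith
  push_cast at h
  linarith

lemma isCoveringMapOn_monicEval {d : ℕ} (hd : 0 < d) :
    IsCoveringMapOn (fun p : (Fin d → ℂ) × ℂ => (p.1, monicEval d p))
      {q | ∀ z, monicEval d (q.1, z) = q.2 → fderiv ℂ (monicEval d) (q.1, z) (0, 1) ≠ 0} := by
  have hc : Continuous (monicEval d) := (contDiff_monicEval d).continuous
  have hproper : IsProperMap fun p : (Fin d → ℂ) × ℂ => (p.1, monicEval d p) := by
    rw [isProperMap_iff_isCompact_preimage]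
    refine ⟨by fun_prop, fun K hK => ?_⟩
    obtain ⟨M, hM⟩ := hK.isBounded.exists_norm_le
    refine Metric.isCompact_of_isClosed_isBounded (hK.isClosed.preimage (by fun_prop)) ?_
    refine (Metric.isBounded_closedBall (x := 0) (r := max M (1 + (d + 1) * M))).subset ?_
    rintro ⟨v, z⟩ hp
    have := hM _ hp
    simp only [Prod.norm_def, sup_le_iff] at this
    simp only [mem_closedBall_zero_iff, Prod.norm_def, sup_le_iff]
    exact ⟨this.1.trans (le_max_left _ _),
      (norm_le_of_norm_monicEval_le this.1 hd this.2).trans (le_max_right _ _)⟩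
  refine hproper.isClosedMap.isCoveringMapOn_of_isLocalHomeomorphOn ?_ ?_
  · rintro ⟨v, w⟩ -
    let P : Polynomial ℂ := Polynomial.X ^ d +
      ∑ i : Fin d, Polynomial.C (v i) * Polynomial.X ^ (i : ℕ) - Polynomial.C w
    have hdeg : P.Monic := by
      have : P = Polynomial.X ^ d +
        (∑ i : Fin d, Polynomial.C (v i) * Polynomial.X ^ (i : ℕ) - Polynomial.C w) := by
        simp only [P]; ring
      rw [this]
      refine Polynomial.monic_X_pow_add ?_
      refine (Polynomial.degree_sub_le _ _).trans_lt (max_lt ?_ ?_)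
      · refine (Polynomial.degree_sum_le _ _).trans_lt ((Finset.sup_lt_iff ?_).2 fun i _ => ?_)
        · exact WithBot.bot_lt_coe _
        · exact (Polynomial.degree_C_mul_X_pow_le _ _).trans_lt (by exact_mod_cast i.2)
      · exact Polynomial.degree_C_le.trans_lt (by exact_mod_cast hd)
    refine Set.Finite.subset (((P.roots.toFinset.finite_toSet).image fun z => (v, z))) ?_
    rintro ⟨v', z⟩ h
    simp only [Set.mem_preimage, Set.mem_singleton_iff, Prod.mk.injEq] at h
    obtain ⟨rfl, h⟩ := h
    refine ⟨z, ?_, rfl⟩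
    simp only [Finset.mem_coe, Multiset.mem_toFinset]
    rw [Polynomial.mem_roots hdeg.ne_zero]
    simp [P, Polynomial.eval_finsetSum, ← h, monicEval]
  · rintro ⟨v, z⟩ h
    have h0 : fderiv ℂ (monicEval d) (v, z) (0, 1) ≠ 0 := h z rfl
    have hF : HasStrictFDerivAt (monicEval d) (fderiv ℂ (monicEval d) (v, z)) (v, z) :=
      (contDiff_monicEval d).contDiffAt.hasStrictFDerivAt (by simp)
    set L := fderiv ℂ (monicEval d) (v, z)
    have hP : HasStrictFDerivAt (fun p : (Fin d → ℂ) × ℂ => (p.1, monicEval d p))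
      ((ContinuousLinearMap.fst ℂ _ _).prod L) (v, z) := hasStrictFDerivAt_fst.prodMk hF
    have hinj : Function.Injective
        (((ContinuousLinearMap.fst ℂ (Fin d → ℂ) ℂ).prod L : _ →L[ℂ] _) :
          (Fin d → ℂ) × ℂ →ₗ[ℂ] (Fin d → ℂ) × ℂ) := by
      rw [injective_iff_map_eq_zero]
      rintro ⟨a, b⟩ hab
      simp only [ContinuousLinearMap.coe_coe, ContinuousLinearMap.prod_apply,
        ContinuousLinearMap.coe_fst', Prod.mk_eq_zero] at hab
      obtain ⟨rfl, hab⟩ := hab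
      have : ((0 : Fin d → ℂ), b) = b • (0, 1) := by simp
      rw [this, map_smul, smul_eq_mul, mul_eq_zero] at hab
      simp [hab.resolve_right h0]
    let e := (LinearEquiv.ofInjectiveEndo _ hinj).toContinuousLinearEquiv
    have he : HasStrictFDerivAt (fun p : (Fin d → ℂ) × ℂ => (p.1, monicEval d p))
      (e : (Fin d → ℂ) × ℂ →L[ℂ] (Fin d → ℂ) × ℂ) (v, z) := by
      convert hP
      ext p <;> rfl
    exact ⟨_, he.mem_toOpenPartialHomeomorph_source, by simp⟩

lemma hasDerivAt_monicEval {d : ℕ} (v : Fin d → ℂ) (z : ℂ) :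
    HasDerivAt (fun z => monicEval d (v, z)) (fderiv ℂ (monicEval d) (v, z) (0, 1)) z := by
  have h := ((contDiff_monicEval d).differentiable (by simp) (v, z)).hasFDerivAt
  exact h.comp_hasDerivAt z ((hasDerivAt_const z v).prodMk (hasDerivAt_id z))

open Polynomial in
/-- Simple roots of a continuous family of monic polynomials follow the parameter. -/
lemma existsUnique_continuous_root {d : ℕ} (q : ℝ → ℂ[X]) (hq : ∀ t, (q t).Monic)
    (hd : ∀ t, (q t).natDegree = d) (hcont : ∀ i, Continuous fun t => (q t).coeff i)
    (hsimple : ∀ t z, (q t).eval z = 0 → (q t).derivative.eval z ≠ 0) (t₀ : ℝ) (z₀ : ℂ)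
    (hz₀ : (q t₀).eval z₀ = 0) :
    ∃! z : C(ℝ, ℂ), z t₀ = z₀ ∧ ∀ t, (q t).eval (z t) = 0 := by
  have hd0 : 0 < d := by
    rw [← hd t₀]
    refine Nat.pos_of_ne_zero fun h => ?_
    rw [(hq t₀).natDegree_eq_zero.1 h] at hz₀
    simp at hz₀
  have heval (t : ℝ) (z : ℂ) : monicEval d (fun i : Fin d => (q t).coeff i, z) = (q t).eval z := by
    rw [eval_eq_sum_range, hd, Finset.sum_range_succ, ← hd t, (hq t).coeff_natDegree, hd t,
      Finset.sum_range, one_mul, add_comm]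
    rfl
  let σ : C(ℝ, (Fin d → ℂ) × ℂ) := ⟨fun t => (fun i : Fin d => (q t).coeff i, 0), by fun_prop⟩
  have key := (isCoveringMapOn_monicEval hd0).existsUnique_continuousMap_lifts σ
    (a₀ := t₀) (e₀ := (fun i : Fin d => (q t₀).coeff i, z₀)) (by simp [σ, heval, hz₀]) (by
      rintro t z (hz : monicEval d (fun i : Fin d => (q t).coeff i, z) = 0)
      have h := hasDerivAt_monicEval (fun i : Fin d => (q t).coeff i) z
      simp only [heval] at h hz
      change fderiv ℂ (monicEval d) (fun i : Fin d => (q t).coeff i, z) (0, 1) ≠ 0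
      rw [← ((q t).hasDerivAt z).unique h]
      exact hsimple t z hz)
  obtain ⟨F, ⟨hF0, hF⟩, huniq⟩ := key
  have hF' (t : ℝ) : (F t).1 = (fun i : Fin d => (q t).coeff i) ∧ monicEval d (F t) = 0 := by
    simpa [σ] using congrFun hF t
  refine ⟨⟨fun t => (F t).2, by fun_prop⟩, ⟨by simp [hF0], fun t => ?_⟩, ?_⟩
  · change (q t).eval (F t).2 = 0
    rw [← heval, ← (hF' t).1]
    exact (hF' t).2
  · rintro z ⟨hz0, hz⟩
    have := huniq ⟨fun t => (fun i : Fin d => (q t).coeff i, z t), by fun_prop⟩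
      ⟨by simp [hz0], by ext1 t; simp [σ, heval, hz]⟩
    ext t
    simp [← this]

open Polynomial nonZeroDivisors in
/-- Generically, a finitely generated algebraic extension of an integrally closed domain of
characteristic zero is simple and étale. -/
lemma exists_generic_primitive_element (R A : Type*) [CommRing R] [IsDomain R]
    [IsIntegrallyClosed R] [CharZero R] [CommRing A] [IsDomain A] [Algebra R A] [FaithfulSMul R A]
    [Algebra.IsAlgebraic R A] [Algebra.FiniteType R A] :
    ∃ θ : A, IsIntegral R θ ∧ ∃ D : R, D ≠ 0 ∧
      (∃ u v : R[X], u * minpoly R θ + v * (minpoly R θ).derivative = C D) ∧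
      ∀ a : A, ∃ (k : ℕ) (G : R[X]), D ^ k • a = aeval θ G := by
  classical
  let F := FractionRing R
  let K := FractionRing A
  let _ : Algebra F K := FractionRing.liftAlgebra R K
  have : IsScalarTower R F K := FractionRing.isScalarTower_liftAlgebra R K
  have : CharZero F := charZero_of_injective_algebraMap (IsFractionRing.injective R F)
  have : Algebra.IsAlgebraic A K := IsLocalization.isAlgebraic K A⁰
  have : Algebra.IsAlgebraic R K := .trans R A K
  have : Algebra.IsAlgebraic F K := .extendScalars (IsFractionRing.injective R F)
  have : Algebra.EssFiniteType A K := .of_isLocalization K A⁰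
  have : Algebra.EssFiniteType R K := .comp R A K
  have : Algebra.EssFiniteType F K := .of_comp R F K
  have : Module.Finite F K := Algebra.finite_of_essFiniteType_of_isAlgebraic
  obtain ⟨α, hα⟩ := Field.exists_primitive_element F K
  obtain ⟨θ, hθ, hθK⟩ : ∃ θ : A, IsIntegral R θ ∧
      IntermediateField.adjoin F {algebraMap A K θ} = ⊤ := by
    obtain ⟨a, ⟨_, ⟨s, hs, rfl⟩⟩, ha⟩ :=
      IsLocalization.exists_mk'_eq (Algebra.algebraMapSubmonoid A R⁰) α
    obtain ⟨r, hr, hint⟩ := (Algebra.IsAlgebraic.isAlgebraic (R := R) a).exists_integral_multiple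
    refine ⟨r • a, hint, ?_⟩
    rw [← top_le_iff, ← hα, IntermediateField.adjoin_simple_le_iff]
    have hs0 : algebraMap F K (algebraMap R F (r * s)) ≠ 0 := by
      rw [_root_.map_ne_zero, Ne, FaithfulSMul.algebraMap_eq_zero_iff]
      exact mul_ne_zero hr (nonZeroDivisors.ne_zero hs)
    rw [IsLocalization.mk'_eq_iff_eq_mul] at ha
    have h1 : α = (algebraMap F K (algebraMap R F (r * s)))⁻¹ * algebraMap A K (r • a) := by
      have ha' : algebraMap A K a = α * algebraMap A K (algebraMap R A s) := ha
      rw [eq_inv_mul_iff_mul_eq₀ hs0, Algebra.smul_def, map_mul (algebraMap A K), ha', map_mul,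
        map_mul, ← IsScalarTower.algebraMap_apply, ← IsScalarTower.algebraMap_apply,
        ← IsScalarTower.algebraMap_apply, ← IsScalarTower.algebraMap_apply]
      ring
    rw [h1]
    exact mul_mem (inv_mem (algebraMap_mem _ _)) (IntermediateField.mem_adjoin_simple_self F _)
  have : CharZero K := charZero_of_injective_algebraMap (algebraMap F K).injective
  have hmin := minpoly.isIntegrallyClosed_eq_field_fractions F K hθ
  have hsep : (minpoly F (algebraMap A K θ)).Separable := Algebra.IsSeparable.isSeparable F _
  obtain ⟨D₀, hD₀, hD₀'⟩ : ∃ D : R, D ≠ 0 ∧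
      ∃ u v : R[X], u * minpoly R θ + v * (minpoly R θ).derivative = C D := by
    obtain ⟨u, v, huv⟩ := hsep
    obtain ⟨b, hb, hu⟩ := IsLocalization.integerNormalization_spec R⁰ u
    obtain ⟨c, hc, hv⟩ := IsLocalization.integerNormalization_spec R⁰ v
    refine ⟨b * c, mul_ne_zero (nonZeroDivisors.ne_zero hb) (nonZeroDivisors.ne_zero hc),
      C c * IsLocalization.integerNormalization R⁰ u,
      C b * IsLocalization.integerNormalization R⁰ v,
      ?_⟩
    apply Polynomial.map_injective (algebraMap R F) (IsFractionRing.injective R F)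
    simp only [Polynomial.map_add, Polynomial.map_mul, hu, hv, map_C, ← hmin, ← derivative_map]
    simp only [Algebra.smul_def, Polynomial.algebraMap_apply]
    rw [map_mul, C_mul, ← mul_one (C _ * C _), ← huv]
    ring
  have hgen (a : A) : ∃ d : R, d ≠ 0 ∧ ∃ G : R[X], d • a = aeval θ G := by
    have : algebraMap A K a ∈ Algebra.adjoin F {algebraMap A K θ} := by
      rw [Algebra.adjoin_eq_top_of_primitive_element (Algebra.IsAlgebraic.isAlgebraic _) hθK]
      trivial
    rw [Algebra.adjoin_singleton_eq_range_aeval] at this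
    obtain ⟨g, hg⟩ := this
    obtain ⟨b, hb, hG⟩ := IsLocalization.integerNormalization_spec R⁰ g
    refine ⟨b, nonZeroDivisors.ne_zero hb, IsLocalization.integerNormalization R⁰ g, ?_⟩
    apply IsFractionRing.injective A K
    rw [← aeval_algebraMap_apply, ← aeval_map_algebraMap F, hG, Algebra.smul_def, Algebra.smul_def,
      map_mul, map_mul]
    rw [← hg, Polynomial.algebraMap_apply, aeval_C, ← IsScalarTower.algebraMap_apply,
      ← IsScalarTower.algebraMap_apply]
    rfl
  choose d hd G hG using hgen
  obtain ⟨S, hS⟩ := Algebra.FiniteType.out (R := R) (A := A)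
  refine ⟨θ, hθ, D₀ * ∏ a ∈ S, d a,
    mul_ne_zero hD₀ (Finset.prod_ne_zero_iff.2 fun a _ => hd a), ?_, ?_⟩
  · obtain ⟨u, v, huv⟩ := hD₀'
    refine ⟨C (∏ a ∈ S, d a) * u, C (∏ a ∈ S, d a) * v, ?_⟩
    rw [C_mul, ← huv]
    ring
  · intro a
    have : a ∈ Algebra.adjoin R (S : Set A) := hS ▸ trivial
    induction this using Algebra.adjoin_induction with
    | mem a ha =>
      obtain ⟨e, he⟩ := Finset.dvd_prod_of_mem d ha
      refine ⟨1, C (D₀ * e) * G a, ?_⟩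
      rw [map_mul, ← hG, he, aeval_C, Algebra.smul_def, Algebra.smul_def, pow_one]
      simp only [map_mul]
      ring
    | algebraMap r => exact ⟨0, C r, by simp⟩
    | add a b _ _ ha hb =>
      obtain ⟨k, G, h⟩ := ha
      obtain ⟨l, H, h'⟩ := hb
      refine ⟨k + l, C ((D₀ * ∏ a ∈ S, d a) ^ l) * G + C ((D₀ * ∏ a ∈ S, d a) ^ k) * H, ?_⟩
      rw [map_add, map_mul, map_mul, ← h, ← h', aeval_C, aeval_C]
      simp only [Algebra.smul_def, map_pow]
      ring
    | mul a b _ _ ha hb =>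
      obtain ⟨k, G, h⟩ := ha
      obtain ⟨l, H, h'⟩ := hb
      refine ⟨k + l, G * H, ?_⟩
      rw [map_mul, ← h, ← h']
      simp only [Algebra.smul_def, map_pow]
      ring

open Polynomial in
lemma exists_ringHom_of_root {R A B : Type*} [CommRing R] [IsDomain R]
    [IsIntegrallyClosed R] [CommRing A] [IsDomain A] [Algebra R A] [FaithfulSMul R A] [Field B]
    {θ : A} (hθ : IsIntegral R θ) {D : R}
    (hgen : ∀ a : A, ∃ (k : ℕ) (G : R[X]), D ^ k • a = aeval θ G)
    (p : R →+* B) (hp : p D ≠ 0) (z : B) (hz : (minpoly R θ).eval₂ p z = 0) :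
    ∃ y : A →+* B, y.comp (algebraMap R A) = p ∧ y θ = z := by
  choose k G hG using hgen
  have wd (G H : R[X]) (h : aeval θ G = aeval θ H) : G.eval₂ p z = H.eval₂ p z := by
    have : aeval θ (G - H) = 0 := by rw [map_sub, h, sub_self]
    obtain ⟨Q, hQ⟩ := minpoly.isIntegrallyClosed_dvd hθ this
    rw [← sub_eq_zero, ← eval₂_sub, hQ, eval₂_mul, hz, zero_mul]
  let y (a : A) : B := (G a).eval₂ p z / p D ^ k a
  have hy (a : A) (l : ℕ) (H : R[X]) (h : D ^ l • a = aeval θ H) :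
      y a * p D ^ l = H.eval₂ p z := by
    have h1 : aeval θ (C (D ^ l) * G a) = aeval θ (C (D ^ k a) * H) := by
      rw [map_mul, map_mul, ← hG, ← h, aeval_C, aeval_C]
      simp only [Algebra.smul_def]
      ring
    have h2 := wd _ _ h1
    rw [eval₂_mul, eval₂_mul, eval₂_C, eval₂_C, map_pow, map_pow] at h2
    simp only [y]
    field_simp
    linear_combination h2
  have hy' (a : A) (l : ℕ) (H : R[X]) (b : B) (h : D ^ l • a = aeval θ H)
      (hb : b * p D ^ l = H.eval₂ p z) : y a = b :=
    mul_right_cancel₀ (pow_ne_zero l hp) ((hy a l H h).trans hb.symm)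
  have hyG (a : A) : y a * p D ^ k a = (G a).eval₂ p z := hy a _ _ (hG a)
  refine ⟨⟨⟨⟨y, ?_⟩, ?_⟩, ?_, ?_⟩, ?_, ?_⟩
  · exact hy' 1 0 1 1 (by simp) (by simp)
  · intro a b
    refine hy' (a * b) (k a + k b) (G a * G b) _ ?_ ?_
    · rw [map_mul, ← hG, ← hG]
      simp only [Algebra.smul_def, map_pow]
      ring
    · rw [eval₂_mul, ← hyG, ← hyG]
      ring
  · exact hy' 0 0 0 0 (by simp) (by simp)
  · intro a b
    refine hy' (a + b) (k a + k b) (C (D ^ k b) * G a + C (D ^ k a) * G b) _ ?_ ?_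
    · rw [map_add, map_mul, map_mul, ← hG, ← hG, aeval_C, aeval_C]
      simp only [Algebra.smul_def, map_pow]
      ring
    · rw [eval₂_add, eval₂_mul, eval₂_mul, ← hyG, ← hyG, eval₂_C, eval₂_C, map_pow, map_pow]
      ring
  · ext r
    exact hy' (algebraMap R A r) 0 (C r) (p r) (by simp) (by simp)
  · exact hy' θ 0 X z (by simp) (by simp)

/-- The set of complex points of `A` with the topology of pointwise convergence. -/
noncomputable abbrev AlgHom.pointwiseTopology (A : Type*) [CommRing A] [Algebra ℂ A] :
    TopologicalSpace (A →ₐ[ℂ] ℂ) :=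
  TopologicalSpace.induced (fun φ : A →ₐ[ℂ] ℂ => (φ : A → ℂ)) inferInstance

section ComplexPoints

attribute [local instance] AlgHom.pointwiseTopology

lemma AlgHom.continuous_pointwise_iff {A Y : Type*} [CommRing A] [Algebra ℂ A]
    [TopologicalSpace Y] {f : Y → (A →ₐ[ℂ] ℂ)} :
    Continuous f ↔ ∀ a, Continuous fun y => f y a := by
  rw [continuous_induced_rng, continuous_pi_iff]
  rfl

lemma AlgHom.tendsto_pointwise_iff {A Y : Type*} [CommRing A] [Algebra ℂ A]
    {f : Y → (A →ₐ[ℂ] ℂ)} {l : Filter Y} {x : A →ₐ[ℂ] ℂ} :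
    Filter.Tendsto f l (nhds x) ↔ ∀ a, Filter.Tendsto (fun y => f y a) l (nhds (x a)) := by
  rw [nhds_induced, Filter.tendsto_comap_iff, tendsto_pi_nhds]
  rfl

open Polynomial in
lemma exists_generic_unique_lift (R A : Type*) [CommRing R] [IsDomain R]
    [IsIntegrallyClosed R] [Algebra ℂ R] [CommRing A] [IsDomain A] [Algebra ℂ A] [Algebra R A]
    [IsScalarTower ℂ R A] [FaithfulSMul R A] [Algebra.IsAlgebraic R A] [Algebra.FiniteType ℂ A] :
    ∃ D : R, D ≠ 0 ∧
      (∀ p : R →ₐ[ℂ] ℂ, p D ≠ 0 →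
        {y : A →ₐ[ℂ] ℂ | y.comp (IsScalarTower.toAlgHom ℂ R A) = p}.Finite) ∧
      ∀ σ : ℝ → (R →ₐ[ℂ] ℂ), Continuous σ → (∀ t, σ t D ≠ 0) → ∀ (t₀ : ℝ) (y₀ : A →ₐ[ℂ] ℂ),
        y₀.comp (IsScalarTower.toAlgHom ℂ R A) = σ t₀ →
        ∃! γ : ℝ → (A →ₐ[ℂ] ℂ), Continuous γ ∧ γ t₀ = y₀ ∧
          ∀ t, (γ t).comp (IsScalarTower.toAlgHom ℂ R A) = σ t := by
  have : CharZero R := charZero_of_injective_algebraMap (algebraMap ℂ R).injective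
  have : Algebra.FiniteType R A := .of_restrictScalars_finiteType ℂ R A
  obtain ⟨θ, hθ, D, hD, ⟨u, v, huv⟩, hgen⟩ := exists_generic_primitive_element R A
  have heval (y : A →ₐ[ℂ] ℂ) (p : R →ₐ[ℂ] ℂ) (h : y.comp (IsScalarTower.toAlgHom ℂ R A) = p)
      (G : R[X]) : y (aeval θ G) = G.eval₂ (p : R →+* ℂ) (y θ) := by
    rw [aeval_def, ← AlgHom.coe_toRingHom, hom_eval₂, ← h]
    rfl
  have hval (y : A →ₐ[ℂ] ℂ) (p : R →ₐ[ℂ] ℂ) (h : y.comp (IsScalarTower.toAlgHom ℂ R A) = p)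
      {a : A} {k : ℕ} {G : R[X]} (hG : D ^ k • a = aeval θ G) :
      p D ^ k * y a = G.eval₂ (p : R →+* ℂ) (y θ) := by
    rw [← heval y p h, ← hG, Algebra.smul_def, map_mul, ← map_pow, ← h]
    rfl
  have hext (p : R →ₐ[ℂ] ℂ) (hp : p D ≠ 0) (y y' : A →ₐ[ℂ] ℂ)
      (h : y.comp (IsScalarTower.toAlgHom ℂ R A) = p)
      (h' : y'.comp (IsScalarTower.toAlgHom ℂ R A) = p) (hy : y θ = y' θ) : y = y' := by
    ext a
    obtain ⟨k, G, hG⟩ := hgen a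
    apply mul_left_cancel₀ (pow_ne_zero k hp)
    rw [hval y p h hG, hval y' p h' hG, hy]
  have hroot (y : A →ₐ[ℂ] ℂ) (p : R →ₐ[ℂ] ℂ)
      (h : y.comp (IsScalarTower.toAlgHom ℂ R A) = p) :
      ((minpoly R θ).map (p : R →+* ℂ)).eval (y θ) = 0 := by
    rw [eval_map, ← heval y p h, minpoly.aeval, map_zero]
  have hmonic := minpoly.monic hθ
  refine ⟨D, hD, ?_, ?_⟩
  · intro p hp
    refine Set.Finite.of_injOn (f := fun y => y θ)
      (t := ((minpoly R θ).map (p : R →+* ℂ)).rootSet ℂ) ?_ ?_ (rootSet_finite _ _)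
    · intro y hy
      rw [mem_rootSet]
      exact ⟨(hmonic.map _).ne_zero, hroot y p hy⟩
    · intro y hy y' hy' h
      exact hext p hp y y' hy hy' h
  · intro σ hσ hσD t₀ y₀ hy₀
    rw [AlgHom.continuous_pointwise_iff] at hσ
    obtain ⟨z, ⟨hz₀, hz⟩, hzu⟩ := existsUnique_continuous_root
      (fun t => (minpoly R θ).map (σ t : R →+* ℂ)) (fun t => hmonic.map _)
      (fun t => hmonic.natDegree_map _) (fun i => by simpa using hσ _)
      (fun t z hz h => by
        have h1 := congrArg (fun f => (f.map (σ t : R →+* ℂ)).eval z) huv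
        simp only [Polynomial.map_add, Polynomial.map_mul, eval_add, eval_mul, hz,
          ← derivative_map, h, map_C, eval_C, mul_zero, add_zero] at h1
        exact hσD t h1.symm) t₀ (y₀ θ) (hroot y₀ _ hy₀)
    have key (t : ℝ) : ∃ y : A →ₐ[ℂ] ℂ, y.comp (IsScalarTower.toAlgHom ℂ R A) = σ t ∧
        y θ = z t := by
      obtain ⟨y, hy, hyz⟩ := exists_ringHom_of_root hθ hgen (σ t : R →+* ℂ) (hσD t) (z t)
        (by rw [← eval_map]; exact hz t)
      refine ⟨⟨y, fun c => ?_⟩, ?_, hyz⟩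
      · rw [IsScalarTower.algebraMap_apply ℂ R A]
        exact (RingHom.congr_fun hy _).trans ((σ t).commutes c)
      · ext r
        exact RingHom.congr_fun hy r
    choose γ hγ hγz using key
    refine ⟨γ, ⟨?_, ?_, hγ⟩, ?_⟩
    · rw [AlgHom.continuous_pointwise_iff]
      intro a
      obtain ⟨k, G, hG⟩ := hgen a
      have : (fun t => γ t a) = fun t => G.eval₂ (σ t : R →+* ℂ) (z t) / (σ t D) ^ k := by
        ext t
        rw [← hγz, ← hval (γ t) (σ t) (hγ t) hG, mul_div_cancel_left₀ _ (pow_ne_zero k (hσD t))]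
      rw [this]
      refine Continuous.div ?_ ((hσ D).pow k) fun t => pow_ne_zero k (hσD t)
      simp only [eval₂_eq_sum_range]
      exact continuous_finsetSum _ fun i _ => (hσ _).mul (z.continuous.pow i)
    · exact hext (σ t₀) (hσD t₀) _ _ (hγ t₀) hy₀ ((hγz t₀).trans hz₀)
    · rintro γ' ⟨hc, h0, hγ'⟩
      rw [AlgHom.continuous_pointwise_iff] at hc
      have h1 := hzu ⟨fun t => γ' t θ, hc θ⟩ ⟨by simp [h0], fun t => hroot _ _ (hγ' t)⟩
      funext t
      refine hext (σ t) (hσD t) _ _ (hγ' t) (hγ t) ?_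
      rw [hγz, ← h1]
      rfl

end ComplexPoints

open Polynomial in
lemma AlgHom.exists_comp_eq_of_isIntegral {S A : Type*} [CommRing S] [CommRing A] [Algebra ℂ S]
    [Algebra ℂ A] [Algebra S A] [IsScalarTower ℂ S A] [FaithfulSMul S A] [Algebra.IsIntegral S A]
    (φ : S →ₐ[ℂ] ℂ) : ∃ y : A →ₐ[ℂ] ℂ, y.comp (IsScalarTower.toAlgHom ℂ S A) = φ := by
  have hmax : (RingHom.ker φ).IsMaximal := RingHom.ker_isMaximal_of_surjective φ fun c =>
    ⟨algebraMap ℂ S c, φ.commutes c⟩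
  obtain ⟨Q, hQ, hQφ⟩ := Ideal.exists_ideal_over_maximal_of_isIntegral (S := A) (RingHom.ker φ) (by
    rw [(RingHom.injective_iff_ker_eq_bot _).1 (FaithfulSMul.algebraMap_injective S A)]
    exact bot_le)
  let _ : Field (A ⧸ Q) := Ideal.Quotient.field Q
  have key (s : S) : Ideal.Quotient.mk Q (algebraMap S A s) = algebraMap ℂ (A ⧸ Q) (φ s) := by
    have : s - algebraMap ℂ S (φ s) ∈ Q.comap (algebraMap S A) := by
      rw [hQφ, RingHom.mem_ker, map_sub, AlgHom.commutes]
      exact sub_self _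
    rw [Ideal.mem_comap, map_sub, ← Ideal.Quotient.eq_zero_iff_mem, map_sub, sub_eq_zero,
      ← IsScalarTower.algebraMap_apply] at this
    exact this
  have : Algebra.IsIntegral ℂ (A ⧸ Q) := by
    refine ⟨fun a => ?_⟩
    obtain ⟨a, rfl⟩ := Ideal.Quotient.mk_surjective a
    obtain ⟨p, hp, hpa⟩ := Algebra.IsIntegral.isIntegral (R := S) a
    refine ⟨p.map (φ : S →+* ℂ), hp.map _, ?_⟩
    have h : (algebraMap ℂ (A ⧸ Q)).comp (φ : S →+* ℂ) =
      (Ideal.Quotient.mk Q).comp (algebraMap S A) := RingHom.ext fun s => (key s).symm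
    rw [eval₂_map, h, ← hom_eval₂, hpa, map_zero]
  have hbij := IsAlgClosed.algebraMap_bijective_of_isIntegral (k := ℂ) (K := A ⧸ Q)
  let e : ℂ ≃ₐ[ℂ] A ⧸ Q := AlgEquiv.ofBijective (Algebra.ofId ℂ (A ⧸ Q)) hbij
  refine ⟨(e.symm : (A ⧸ Q) →ₐ[ℂ] ℂ).comp (Ideal.Quotient.mkₐ ℂ Q), ?_⟩
  ext s
  change e.symm (Ideal.Quotient.mk Q (algebraMap S A s)) = φ s
  rw [key, AlgEquiv.commutes]
  rfl

open Polynomial in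
lemma AlgHom.exists_comp_eq_and_apply_eq {R A : Type*} [CommRing R] [IsDomain R]
    [IsIntegrallyClosed R] [CommRing A] [IsDomain A] [Algebra ℂ R]
    [Algebra ℂ A] [Algebra R A] [IsScalarTower ℂ R A] [FaithfulSMul R A] [Algebra.IsIntegral R A]
    (p : R →ₐ[ℂ] ℂ) (b : A) (β : ℂ) (hβ : ((minpoly R b).map (p : R →+* ℂ)).eval β = 0) :
    ∃ y : A →ₐ[ℂ] ℂ, y.comp (IsScalarTower.toAlgHom ℂ R A) = p ∧ y b = β := by
  have hb : IsIntegral R b := Algebra.IsIntegral.isIntegral b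
  let S := Algebra.adjoin R {b}
  let g : AdjoinRoot (minpoly R b) →+* ℂ := AdjoinRoot.lift (p : R →+* ℂ) β (by rwa [← eval_map])
  let e := minpoly.equivAdjoin hb
  let φ : S →+* ℂ := g.comp (e.symm : S →+* AdjoinRoot (minpoly R b))
  have hφR (r : R) : φ (algebraMap R S r) = p r := by
    change g (e.symm (algebraMap R S r)) = p r
    rw [AlgEquiv.commutes]
    exact AdjoinRoot.lift_of _
  have hφb : φ ⟨b, Algebra.subset_adjoin rfl⟩ = β := by
    change g (e.symm _) = β
    have : e (AdjoinRoot.root _) = ⟨b, Algebra.subset_adjoin rfl⟩ := by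
      apply Subtype.ext
      simp [e]
    rw [← this, AlgEquiv.symm_apply_apply]
    exact AdjoinRoot.lift_root _
  let _ : Algebra S A := S.toAlgebra
  have : Algebra.IsIntegral S A := .tower_top (R := R)
  obtain ⟨y, hy⟩ := AlgHom.exists_comp_eq_of_isIntegral (A := A) (⟨φ, fun c => by
    rw [IsScalarTower.algebraMap_apply ℂ R S]
    exact (hφR _).trans (p.commutes c)⟩ : S →ₐ[ℂ] ℂ)
  refine ⟨y, ?_, ?_⟩
  · ext r
    exact (AlgHom.congr_fun hy (algebraMap R S r)).trans (hφR r)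
  · exact (AlgHom.congr_fun hy ⟨b, Algebra.subset_adjoin rfl⟩).trans hφb

open Polynomial in
lemma Polynomial.Monic.exists_root_norm_pow_le {q : ℂ[X]} (hq : q.Monic) (hd : 0 < q.natDegree) :
    ∃ β, q.eval β = 0 ∧ ‖β‖ ^ q.natDegree ≤ ‖q.coeff 0‖ := by
  have hs := IsAlgClosed.splits q
  have hcard : q.roots.card = q.natDegree := IsAlgClosed.card_roots_eq_natDegree
  have hne : q.roots.toFinset.Nonempty := by
    rw [Finset.nonempty_iff_ne_empty, Ne, Multiset.toFinset_eq_empty, ← Multiset.card_eq_zero]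
    omega
  obtain ⟨β, hβ, hmin⟩ := q.roots.toFinset.exists_min_image norm hne
  rw [Multiset.mem_toFinset, mem_roots hq.ne_zero] at hβ
  refine ⟨β, hβ, ?_⟩
  rw [hs.coeff_zero_eq_prod_roots_of_monic hq, norm_mul, norm_pow, norm_neg, norm_one, one_pow,
    one_mul, ← hcard]
  have key (s : Multiset ℂ) (hs : ∀ z ∈ s, ‖β‖ ≤ ‖z‖) : ‖β‖ ^ s.card ≤ ‖s.prod‖ := by
    induction s using Multiset.induction with
    | empty => simp
    | cons a s ih =>
      rw [Multiset.card_cons, Multiset.prod_cons, norm_mul, pow_succ']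
      exact mul_le_mul (hs a (by simp)) (ih fun z hz => hs z (by simp [hz])) (by positivity)
        (norm_nonneg _)
  exact key _ fun z hz => hmin z (by simpa using hz)

lemma AlgHom.finite_setOf_comp_eq (R : Type*) {A : Type*} [CommRing R] [CommRing A]
    [Algebra ℂ R] [Algebra ℂ A] [Algebra R A] [IsScalarTower ℂ R A] [Algebra.IsIntegral R A]
    [Algebra.FiniteType ℂ A] (p : R →ₐ[ℂ] ℂ) :
    {y : A →ₐ[ℂ] ℂ | y.comp (IsScalarTower.toAlgHom ℂ R A) = p}.Finite := by
  obtain ⟨S, hS⟩ := Algebra.FiniteType.out (R := ℂ) (A := A)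
  have h (a : A) : ∃ q : Polynomial ℂ, q ≠ 0 ∧
      ∀ y : A →ₐ[ℂ] ℂ, y.comp (IsScalarTower.toAlgHom ℂ R A) = p → q.eval (y a) = 0 := by
    obtain ⟨q, hq, hqa⟩ := Algebra.IsIntegral.isIntegral (R := R) a
    refine ⟨q.map (p : R →+* ℂ), (hq.map _).ne_zero, ?_⟩
    rintro y rfl
    have := congrArg y hqa
    rw [map_zero, ← AlgHom.coe_toRingHom, Polynomial.hom_eval₂] at this
    rw [Polynomial.eval_map]
    exact this
  choose q hq0 hq using h
  refine Set.Finite.of_injOn (f := fun y (s : S) => y (s : A))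
    (t := {f : S → ℂ | ∀ s : S, f s ∈ (q s).rootSet ℂ}) ?_ ?_
    (Set.Finite.pi' fun s => Polynomial.rootSet_finite _ _)
  · intro y hy s
    rw [Polynomial.mem_rootSet]
    exact ⟨hq0 _, by simpa using hq s y hy⟩
  · intro y _ y' _ h
    refine AlgHom.ext_of_adjoin_eq_top hS fun s hs => ?_
    exact congrFun h ⟨s, hs⟩

lemma AlgHom.exists_separating {A : Type*} [CommRing A] [Algebra ℂ A] (x : A →ₐ[ℂ] ℂ)
    {Y : Set (A →ₐ[ℂ] ℂ)} (hY : Y.Finite) : ∃ b : A, x b = 0 ∧ ∀ y ∈ Y, y ≠ x → y b = 1 := by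
  classical
  have h (y : A →ₐ[ℂ] ℂ) : ∃ b : A, x b = 0 ∧ (y ≠ x → y b = 1) := by
    by_cases hy : y = x
    · exact ⟨0, map_zero _, fun h => (h hy).elim⟩
    · obtain ⟨a, ha⟩ := DFunLike.ne_iff.1 hy
      refine ⟨(y a - x a)⁻¹ • (a - algebraMap ℂ A (x a)), by simp, fun _ => ?_⟩
      simp only [map_smul, map_sub, AlgHom.commutes, Algebra.algebraMap_self, RingHom.id_apply,
        smul_eq_mul]
      exact inv_mul_cancel₀ (sub_ne_zero.2 ha)
  choose b hb0 hb1 using h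
  refine ⟨1 - ∏ y ∈ hY.toFinset, (1 - b y), by simp [hb0], fun y hy hyx => ?_⟩
  rw [map_sub, map_one, map_prod, Finset.prod_eq_zero (hY.mem_toFinset.2 hy), sub_zero]
  rw [map_sub, map_one, hb1 y hyx, sub_self]

section ComplexPoints

attribute [local instance] AlgHom.pointwiseTopology

lemma AlgHom.exists_tendsto_comp_eq {R A Y : Type*} [CommRing R] [IsDomain R]
    [IsIntegrallyClosed R] [CommRing A] [IsDomain A] [Algebra ℂ R]
    [Algebra ℂ A] [Algebra R A] [IsScalarTower ℂ R A] [FaithfulSMul R A] [Algebra.IsIntegral R A]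
    (x : A →ₐ[ℂ] ℂ) (b : A) (hb : x b = 0) {l : Filter Y} (p : Y → (R →ₐ[ℂ] ℂ))
    (hp : Filter.Tendsto p l (nhds (x.comp (IsScalarTower.toAlgHom ℂ R A)))) :
    ∃ y : Y → (A →ₐ[ℂ] ℂ), (∀ k, (y k).comp (IsScalarTower.toAlgHom ℂ R A) = p k) ∧
      Filter.Tendsto (fun k => y k b) l (nhds 0) := by
  have hbi : IsIntegral R b := Algebra.IsIntegral.isIntegral b
  have hm := minpoly.monic hbi
  have hd := minpoly.natDegree_pos hbi
  have h (k : Y) : ∃ y : A →ₐ[ℂ] ℂ, y.comp (IsScalarTower.toAlgHom ℂ R A) = p k ∧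
      ‖y b‖ ^ (minpoly R b).natDegree ≤ ‖p k ((minpoly R b).coeff 0)‖ := by
    obtain ⟨β, hβ, hβ'⟩ := (hm.map (p k : R →+* ℂ)).exists_root_norm_pow_le
      (by rwa [hm.natDegree_map])
    obtain ⟨y, hy, rfl⟩ := AlgHom.exists_comp_eq_and_apply_eq (p k) b β hβ
    refine ⟨y, hy, ?_⟩
    rw [hm.natDegree_map, Polynomial.coeff_map] at hβ'
    exact hβ'
  choose y hy hyb using h
  refine ⟨y, hy, ?_⟩
  have h0 : x.comp (IsScalarTower.toAlgHom ℂ R A) ((minpoly R b).coeff 0) = 0 := by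
    have := congrArg x (minpoly.aeval R b)
    rw [map_zero, Polynomial.aeval_def, ← AlgHom.coe_toRingHom, Polynomial.hom_eval₂,
      AlgHom.coe_toRingHom, hb, Polynomial.eval₂_at_zero] at this
    exact this
  have h1 := (AlgHom.tendsto_pointwise_iff.1 hp ((minpoly R b).coeff 0)).norm
  rw [h0, norm_zero] at h1
  have h2 := squeeze_zero (fun k => by positivity) hyb h1
  rw [tendsto_zero_iff_norm_tendsto_zero]
  have h3 := (h2.rpow_const (p := ((minpoly R b).natDegree : ℝ)⁻¹) (Or.inr (by positivity)))
  rw [Real.zero_rpow (by positivity)] at h3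
  refine h3.congr fun k => ?_
  exact Real.pow_rpow_inv_natCast (norm_nonneg _) hd.ne'

end ComplexPoints

open Filter Topology in
lemma Joined.of_tendsto_atTop {X : Type*} [TopologicalSpace X] {γ : ℝ → X} (hγ : Continuous γ)
    {x : X} (h : Tendsto γ atTop (𝓝 x)) : Joined x (γ 0) := by
  classical
  let η : ℝ → X := Function.update (fun t => γ (|t|⁻¹ - 1)) 0 x
  have hη : Continuous η := by
    rw [continuous_iff_continuousAt]
    intro t
    rcases eq_or_ne t 0 with rfl | ht
    · refine continuousAt_update_same.2 (h.comp ?_)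
      exact tendsto_atTop_add_const_right _ _ (tendsto_inv_nhdsGT_zero.comp tendsto_abs_nhdsNE_zero)
    · refine (continuousAt_update_of_ne ht).2 (hγ.continuousAt.comp ?_)
      exact (continuous_abs.continuousAt.inv₀ (abs_ne_zero.2 ht)).sub continuousAt_const
  exact ⟨⟨⟨fun t => η t, by fun_prop⟩, by simp [η], by simp [η]⟩⟩

section ComplexPoints

attribute [local instance] AlgHom.pointwiseTopology

open Polynomial Filter Topology

lemma AlgHom.exists_tendsto_of_isIntegral {R A Y : Type*} [CommRing R] [CommRing A]
    [Algebra ℂ R] [Algebra ℂ A] [Algebra R A] [IsScalarTower ℂ R A] [Algebra.IsIntegral R A]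
    {p : R →ₐ[ℂ] ℂ} {γ : Y → (A →ₐ[ℂ] ℂ)} {U : Ultrafilter Y}
    (h : Tendsto (fun u => (γ u).comp (IsScalarTower.toAlgHom ℂ R A)) U (𝓝 p)) :
    ∃ y : A →ₐ[ℂ] ℂ, y.comp (IsScalarTower.toAlgHom ℂ R A) = p ∧ Tendsto γ U (𝓝 y) := by
  rw [AlgHom.tendsto_pointwise_iff] at h
  have hlim (a : A) : ∃ c : ℂ, Tendsto (fun u => γ u a) U (𝓝 c) := by
    obtain ⟨q, hq, hqa⟩ := Algebra.IsIntegral.isIntegral (R := R) a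
    have hbd : ∀ᶠ u in (U : Filter Y), ∀ i ∈ Finset.range q.natDegree,
        ‖γ u (algebraMap R A (q.coeff i))‖₊ ≤ ‖p (q.coeff i)‖₊ + 1 := by
      rw [eventually_all_finset]
      intro i _
      have := ((h (q.coeff i)).nnnorm).eventually_lt_const (lt_add_one _)
      exact this.mono fun u hu => hu.le
    let M := (Finset.range q.natDegree).sup fun i => ‖p (q.coeff i)‖₊ + 1
    have hbd' : ∀ᶠ u in (U : Filter Y), γ u a ∈ Metric.closedBall (0 : ℂ) (M + 1) := by
      filter_upwards [hbd] with u hu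
      let φ : R →+* ℂ := (γ u : A →+* ℂ).comp (algebraMap R A)
      have hroot : (q.map φ).IsRoot (γ u a) := by
        have := congrArg (γ u) hqa
        rw [map_zero, ← AlgHom.coe_toRingHom, hom_eval₂] at this
        rw [IsRoot, eval_map]
        exact this
      have h1 := hroot.norm_lt_cauchyBound (hq.map _).ne_zero
      rw [mem_closedBall_zero_iff]
      refine (NNReal.coe_le_coe.2 h1.le).trans ?_
      rw [cauchyBound, (hq.map φ).leadingCoeff, hq.natDegree_map, nnnorm_one, div_one]
      push_cast
      gcongr
      refine Finset.sup_mono_fun fun i hi => ?_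
      rw [coeff_map]
      exact hu i hi
    obtain ⟨c, -, hc⟩ := (isCompact_closedBall (0 : ℂ) (M + 1)).ultrafilter_le_nhds
      (U.map fun u => γ u a) (by rwa [le_principal_iff])
    exact ⟨c, hc⟩
  choose L hL using hlim
  refine ⟨⟨⟨⟨⟨L, ?_⟩, ?_⟩, ?_, ?_⟩, ?_⟩, ?_, ?_⟩
  · exact tendsto_nhds_unique (hL 1) (by simp)
  · exact fun a b => tendsto_nhds_unique (hL (a * b)) (by simpa using (hL a).mul (hL b))
  · exact tendsto_nhds_unique (hL 0) (by simp)
  · exact fun a b => tendsto_nhds_unique (hL (a + b)) (by simpa using (hL a).add (hL b))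
  · exact fun c => tendsto_nhds_unique (hL (algebraMap ℂ A c)) (by simp)
  · ext r
    exact tendsto_nhds_unique (hL (algebraMap R A r)) (h r)
  · exact AlgHom.tendsto_pointwise_iff.2 hL

lemma AlgHom.tendsto_of_frequently_norm_lt {R A : Type*} [CommRing R] [CommRing A]
    [Algebra ℂ R] [Algebra ℂ A] [Algebra R A] [IsScalarTower ℂ R A] [Algebra.IsIntegral R A]
    {x : A →ₐ[ℂ] ℂ} {b : A} (hx : x b = 0)
    (hb : ∀ y : A →ₐ[ℂ] ℂ, y.comp (IsScalarTower.toAlgHom ℂ R A) =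
      x.comp (IsScalarTower.toAlgHom ℂ R A) → y ≠ x → y b = 1)
    {γ : ℝ → (A →ₐ[ℂ] ℂ)} (hγ : Continuous γ)
    (h : Tendsto (fun u => (γ u).comp (IsScalarTower.toAlgHom ℂ R A)) atTop
      (𝓝 (x.comp (IsScalarTower.toAlgHom ℂ R A))))
    (hfr : ∀ δ > 0, ∃ᶠ u in atTop, ‖γ u b‖ < δ) : Tendsto γ atTop (𝓝 x) := by
  have hcont : Continuous fun u => ‖γ u b‖ := (AlgHom.continuous_pointwise_iff.1 hγ b).norm
  rw [tendsto_iff_ultrafilter]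
  intro U hU
  obtain ⟨y, hy, hyU⟩ := AlgHom.exists_tendsto_of_isIntegral (h.mono_left hU)
  by_cases hyx : y = x
  · exact hyx ▸ hyU
  exfalso
  have hyb := (AlgHom.tendsto_pointwise_iff.1 hyU b).norm
  rw [hb y hy hyx, norm_one] at hyb
  have h1 : ∃ᶠ u in atTop, 2⁻¹ < ‖γ u b‖ :=
    ((hyb.eventually_const_lt (by norm_num : (2⁻¹ : ℝ) < 1)).frequently).filter_mono hU
  have h2 : ∃ᶠ u in atTop, ‖γ u b‖ = 2⁻¹ := by
    rw [frequently_atTop] at h1 ⊢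
    intro N
    obtain ⟨u, hu, hu'⟩ := h1 N
    obtain ⟨v, hv, hv'⟩ := frequently_atTop.1 (hfr 2⁻¹ (by norm_num)) u
    obtain ⟨w, hw, hw'⟩ := intermediate_value_Icc' hv hcont.continuousOn
      (show (2⁻¹ : ℝ) ∈ Set.Icc _ _ from ⟨hv'.le, hu'.le⟩)
    exact ⟨w, hu.trans hw.1, hw'⟩
  have hne : (atTop ⊓ 𝓟 {u | ‖γ u b‖ = 2⁻¹}).NeBot := frequently_mem_iff_neBot.1 h2
  obtain ⟨V, hV⟩ := Ultrafilter.exists_le (atTop ⊓ 𝓟 {u | ‖γ u b‖ = 2⁻¹})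
  obtain ⟨z, hz, hzV⟩ := AlgHom.exists_tendsto_of_isIntegral (h.mono_left (hV.trans inf_le_left))
  have hzb := (AlgHom.tendsto_pointwise_iff.1 hzV b).norm
  have hc : Tendsto (fun u => ‖γ u b‖) V (𝓝 2⁻¹) :=
    tendsto_const_nhds.congr' (EventuallyEq.symm (le_principal_iff.1 (hV.trans inf_le_right)))
  have h3 := tendsto_nhds_unique hzb hc
  by_cases hzx : z = x
  · rw [hzx, hx, norm_zero] at h3
    norm_num at h3
  · rw [hb z hz hzx, norm_one] at h3
    norm_num at h3

lemma continuous_aeval_pointwise {ι Y : Type*} [TopologicalSpace Y] {v : Y → ι → ℂ}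
    (hv : Continuous v) :
    Continuous fun t => (MvPolynomial.aeval (v t) : MvPolynomial ι ℂ →ₐ[ℂ] ℂ) := by
  rw [AlgHom.continuous_pointwise_iff]
  intro a
  exact (MvPolynomial.continuous_eval a).comp hv

lemma exists_curve_eval_ne_zero {ι : Type*} {D : MvPolynomial ι ℂ}
    (hD : D ≠ 0) (x : ι → ℂ) : ∃ v : ℝ → ι → ℂ, Continuous v ∧ Tendsto v atTop (𝓝 x) ∧
      ∀ u, MvPolynomial.eval (v u) D ≠ 0 := by
  obtain ⟨w, hw⟩ : ∃ w, MvPolynomial.eval w D ≠ 0 := by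
    by_contra! h
    exact hD (MvPolynomial.funext fun w => by rw [h, map_zero])
  let d : ℂ[X] := MvPolynomial.aeval (fun i => C (x i) + X * C (w i - x i)) D
  have hd (s : ℂ) : d.eval s = MvPolynomial.eval (x + s • (w - x)) D := by
    rw [← coe_evalRingHom]
    simp only [d, MvPolynomial.aeval_def, MvPolynomial.hom_eval₂]
    have : (evalRingHom s).comp (algebraMap ℂ ℂ[X]) = RingHom.id ℂ := by
      ext; simp
    rw [this, MvPolynomial.eval₂_id]
    congr 2
    ext i
    simp
  have hd0 : d ≠ 0 := by
    intro h
    apply hw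
    have := hd 1
    rw [h, eval_zero, one_smul, add_sub_cancel] at this
    exact this.symm
  obtain ⟨ε, hε, hε'⟩ : ∃ ε : ℝ, 0 < ε ∧ ∀ z : ℂ, d.eval z = 0 → z ≠ 0 → ε < ‖z‖ := by
    have h1 : ∀ᶠ ε : ℝ in 𝓝[>] 0, ∀ z ∈ d.roots.toFinset, z ≠ 0 → ε < ‖z‖ := by
      rw [eventually_all_finset]
      intro z _
      by_cases hz : z = 0
      · simp [hz]
      · exact (eventually_nhdsWithin_of_eventually_nhds
          (eventually_lt_nhds (norm_pos_iff.2 hz))).mono fun _ h _ => h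
    obtain ⟨ε, h, h'⟩ := (h1.and self_mem_nhdsWithin).exists
    exact ⟨ε, h', fun z hz => h z (by simp [hd0, hz])⟩
  have hc (u : ℝ) : 0 < 1 + u ^ 2 := by positivity
  refine ⟨fun u => x + ((ε / (1 + u ^ 2) : ℝ) : ℂ) • (w - x), ?_, ?_, ?_⟩
  · have : Continuous fun u : ℝ => ε / (1 + u ^ 2) :=
      Continuous.div continuous_const (by fun_prop) fun u => (hc u).ne'
    fun_prop
  · have h1 : Tendsto (fun u : ℝ => ε / (1 + u ^ 2)) atTop (𝓝 0) :=
      Tendsto.div_atTop tendsto_const_nhds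
        (tendsto_atTop_add_const_left _ _ (tendsto_pow_atTop two_ne_zero))
    have h2 := (((Complex.continuous_ofReal.tendsto 0).comp h1).smul_const (w - x)).const_add x
    simpa using h2
  · intro u h
    rw [← hd] at h
    have hpos : 0 < ε / (1 + u ^ 2) := div_pos hε (hc u)
    have h1 := hε' _ h (by exact_mod_cast hpos.ne')
    rw [Complex.norm_real, Real.norm_of_nonneg hpos.le, lt_div_iff₀ (hc u)] at h1
    nlinarith [mul_nonneg hε.le (sq_nonneg u)]

lemma AlgHom.exists_joined_apply_ne_zero {A : Type*} [CommRing A] [IsDomain A] [Algebra ℂ A]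
    [Algebra.FiniteType ℂ A] (x : A →ₐ[ℂ] ℂ) {h : A} (hh : h ≠ 0) :
    ∃ y : A →ₐ[ℂ] ℂ, y h ≠ 0 ∧ Joined x y := by
  obtain ⟨n, g, hg, hgi⟩ := exists_integral_inj_algHom_of_fg ℂ A
  let R := MvPolynomial (Fin n) ℂ
  let _ : Algebra R A := g.toRingHom.toAlgebra
  have : IsScalarTower ℂ R A := .of_algHom g
  have : FaithfulSMul R A := (faithfulSMul_iff_algebraMap_injective R A).2 hg
  have : Algebra.IsIntegral R A := ⟨hgi⟩
  obtain ⟨c, hc, e, he⟩ :=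
    (Algebra.IsAlgebraic.isAlgebraic (R := R) h).exists_nonzero_dvd
      (mem_nonZeroDivisors_of_ne_zero hh)
  obtain ⟨D, hD, hfin, hlift⟩ := exists_generic_unique_lift R A
  let π (y : A →ₐ[ℂ] ℂ) : R →ₐ[ℂ] ℂ := y.comp (IsScalarTower.toAlgHom ℂ R A)
  let x' : Fin n → ℂ := fun i => π x (.X i)
  have hx' : (MvPolynomial.aeval x' : R →ₐ[ℂ] ℂ) = π x := by
    refine MvPolynomial.algHom_ext fun i => ?_
    exact MvPolynomial.aeval_X x' i
  obtain ⟨v, hv, hvx, hv0⟩ := exists_curve_eval_ne_zero (mul_ne_zero hD hc) x'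
  let σ (u : ℝ) : R →ₐ[ℂ] ℂ := MvPolynomial.aeval (v u)
  have hσ : Continuous σ := continuous_aeval_pointwise hv
  have hσD (u : ℝ) : σ u D ≠ 0 := fun h => hv0 u (by
    rw [map_mul]
    exact mul_eq_zero_of_left h _)
  have hσc (u : ℝ) : σ u c ≠ 0 := fun h => hv0 u (by
    rw [map_mul]
    exact mul_eq_zero_of_right _ h)
  have hσx : Tendsto σ atTop (𝓝 (π x)) := by
    rw [← hx']
    exact (continuous_aeval_pointwise continuous_id).continuousAt.tendsto.comp hvx
  obtain ⟨b, hb0, hb1⟩ := x.exists_separating (AlgHom.finite_setOf_comp_eq R (π x))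
  obtain ⟨y, hy, hyb⟩ := x.exists_tendsto_comp_eq b hb0 σ hσx
  have hY := hfin (σ 0) (hσD 0)
  have hl (u : ℝ) : ∃ γ : ℝ → (A →ₐ[ℂ] ℂ), Continuous γ ∧ (∀ t, π (γ t) = σ t) ∧ γ u = y u := by
    obtain ⟨γ, ⟨h1, h2, h3⟩, -⟩ := hlift σ hσ hσD u (y u) (hy u)
    exact ⟨γ, h1, h3, h2⟩
  choose γ hγ hγσ hγy using hl
  have heq (u u' : ℝ) (h : γ u 0 = γ u' 0) : γ u = γ u' :=
    (hlift σ hσ hσD 0 (γ u 0) (hγσ u 0)).unique ⟨hγ u, rfl, hγσ u⟩ ⟨hγ u', h.symm, hγσ u'⟩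
  obtain ⟨z, hz⟩ : ∃ z, ∃ᶠ u in atTop, γ u 0 = z := by
    by_contra! hne
    have := (eventually_all_finite hY).2 fun z _ => hne z
    obtain ⟨u, hu⟩ := this.exists
    exact hu (γ u 0) (hγσ u 0) rfl
  obtain ⟨u₀, hu₀⟩ := hz.exists
  refine ⟨γ u₀ 0, ?_, ?_⟩
  · intro h0
    apply hσc 0
    rw [← hγσ u₀ 0]
    change γ u₀ 0 (algebraMap R A c) = 0
    rw [he, map_mul, h0, zero_mul]
  · refine Joined.of_tendsto_atTop (hγ u₀) ?_
    refine AlgHom.tendsto_of_frequently_norm_lt hb0 hb1 (hγ u₀) ?_ ?_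
    · exact hσx.congr fun t => (hγσ u₀ t).symm
    · intro δ hδ
      have h1 := hyb.norm
      rw [norm_zero] at h1
      refine (hz.and_eventually (h1.eventually_lt_const hδ)).mono ?_
      rintro u ⟨hu, hu'⟩
      rwa [heq u₀ u (hu₀.trans hu.symm), hγy]

end ComplexPoints

section LogIncrement

open unitInterval

/-- The increment of a continuous logarithm of the nowhere vanishing function `f` along `γ`. -/
noncomputable def logIncrement {X : Type*} [TopologicalSpace X] (f : C(X, {z : ℂ // z ≠ 0}))
    {x y : X} (γ : Path x y) : ℂ :=
  Complex.isCoveringMap_exp.liftPath (f.comp γ) (Complex.log (f x))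
    (Subtype.ext (by simpa using (Complex.exp_log (f x).2).symm)) 1 - Complex.log (f x)

variable {X : Type*} [TopologicalSpace X] (f : C(X, {z : ℂ // z ≠ 0})) {x y z : X}

lemma exists_continuous_log (γ : Path x y) :
    ∃ L : C(I, ℂ), ∀ t, Complex.exp (L t) = f (γ t) := by
  refine ⟨Complex.isCoveringMap_exp.liftPath (f.comp γ) (Complex.log (f x))
    (Subtype.ext (by simpa using (Complex.exp_log (f x).2).symm)), fun t => ?_⟩
  exact congrArg Subtype.val (congrFun (Complex.isCoveringMap_exp.liftPath_lifts _ _ _) t)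

variable {f} in
lemma logIncrement_eq {γ : Path x y} (L : C(I, ℂ)) (hL : ∀ t, Complex.exp (L t) = f (γ t)) :
    logIncrement f γ = L 1 - L 0 := by
  have h0 : Complex.exp (Complex.log (f x) - L 0) = 1 := by
    rw [Complex.exp_sub, hL, γ.source, Complex.exp_log (f x).2, div_self (f x).2]
  have h : L + .const I (Complex.log (f x) - L 0) =
      Complex.isCoveringMap_exp.liftPath (f.comp γ) (Complex.log (f x))
        (Subtype.ext (by simpa using (Complex.exp_log (f x).2).symm)) := by
    rw [Complex.isCoveringMap_exp.eq_liftPath_iff']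
    refine ⟨funext fun t => Subtype.ext ?_, by simp⟩
    simp [Complex.exp_add, h0, hL]
  rw [logIncrement, ← h, ContinuousMap.add_apply, ContinuousMap.const_apply]
  ring

lemma logIncrement_trans (γ : Path x y) (γ' : Path y z) :
    logIncrement f (γ.trans γ') = logIncrement f γ + logIncrement f γ' := by
  obtain ⟨L, hL⟩ := exists_continuous_log f (γ.trans γ')
  have h1 (t : I) : (t : ℝ) / 2 ∈ I := ⟨by linarith [t.2.1], by linarith [t.2.2]⟩
  have h2 (t : I) : (1 + t : ℝ) / 2 ∈ I := ⟨by linarith [t.2.1], by linarith [t.2.2]⟩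
  let L₁ : C(I, ℂ) := ⟨fun t => L ⟨_, h1 t⟩, by fun_prop⟩
  let L₂ : C(I, ℂ) := ⟨fun t => L ⟨_, h2 t⟩, by fun_prop⟩
  rw [logIncrement_eq L hL, logIncrement_eq L₁, logIncrement_eq L₂]
  · have e1 : L₁ 0 = L 0 := congrArg L (Subtype.ext (by simp))
    have e2 : L₂ 1 = L 1 := congrArg L (Subtype.ext (by norm_num))
    have e3 : L₁ 1 = L₂ 0 := congrArg L (Subtype.ext (by simp))
    rw [e1, e2, e3]
    ring
  · intro t
    refine (hL _).trans ?_
    congr 2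
    rw [Path.trans_apply]
    split_ifs with h
    · have h' : (1 + t : ℝ) / 2 ≤ 1 / 2 := h
      have h0 : t = 0 := Subtype.ext (le_antisymm (by simp; linarith) t.2.1)
      subst h0
      rw [γ'.source]
      convert! γ.target
      simp
    · congr 1
      exact Subtype.ext (by simp; ring)
  · intro t
    refine (hL _).trans ?_
    congr 2
    rw [Path.trans_apply, dif_pos (by simpa using by linarith [t.2.2])]
    congr 1
    exact Subtype.ext (by simp; ring)

lemma logIncrement_symm (γ : Path x y) : logIncrement f γ.symm = -logIncrement f γ := by
  obtain ⟨L, hL⟩ := exists_continuous_log f γ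
  rw [logIncrement_eq L hL,
    logIncrement_eq (γ := γ.symm) (L.comp ⟨σ, continuous_symm⟩) fun t => hL (σ t)]
  simp

lemma logIncrement_mul (g h : C(X, {z : ℂ // z ≠ 0})) (hh : ∀ x, (h x : ℂ) = f x * g x)
    (γ : Path x y) : logIncrement h γ = logIncrement f γ + logIncrement g γ := by
  obtain ⟨L, hL⟩ := exists_continuous_log f γ
  obtain ⟨M, hM⟩ := exists_continuous_log g γ
  rw [logIncrement_eq L hL, logIncrement_eq M hM, logIncrement_eq (L + M) fun t => by
    simp [Complex.exp_add, hL, hM, hh]]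
  simp only [ContinuousMap.add_apply]
  ring

lemma logIncrement_eq_of_homotopic {γ γ' : Path x y} (h : γ.Homotopic γ') :
    logIncrement f γ = logIncrement f γ' := by
  unfold logIncrement
  congr 1
  refine Complex.isCoveringMap_exp.liftPath_apply_one_eq_of_homotopicRel ?_ _ _ _
  exact ContinuousMap.HomotopicRel.comp_continuousMap h f

lemma exists_logIncrement_eq_int (γ : Path x x) :
    ∃ n : ℤ, logIncrement f γ = n * (2 * Real.pi * Complex.I) := by
  obtain ⟨L, hL⟩ := exists_continuous_log f γ
  have : Complex.exp (L 1) = Complex.exp (L 0) := by rw [hL, hL, γ.source, γ.target]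
  obtain ⟨n, hn⟩ := Complex.exp_eq_exp_iff_exists_int.1 this
  exact ⟨n, by rw [logIncrement_eq L hL, hn, add_sub_cancel_left]⟩

/-- The winding number of a nowhere vanishing function along loops. -/
lemma exists_windingNumber_hom (x : X) :
    ∃ w : FundamentalGroup X x →* Multiplicative ℤ, ∀ γ : Path x x,
      logIncrement f γ = (w (Path.Homotopic.Quotient.mk γ)).toAdd * (2 * Real.pi * Complex.I) := by
  choose n hn using exists_logIncrement_eq_int f (x := x)
  have inj {a b : ℤ} (h : (a : ℂ) * (2 * Real.pi * Complex.I) = b * (2 * Real.pi * Complex.I)) :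
      a = b := by exact_mod_cast mul_right_cancel₀ Complex.two_pi_I_ne_zero h
  let w (p : FundamentalGroup X x) : Multiplicative ℤ :=
    Quotient.lift (s := Path.Homotopic.setoid x x) (fun γ => Multiplicative.ofAdd (n γ))
      (fun γ γ' h => congrArg _ (inj (by
        rw [← hn, ← hn, logIncrement_eq_of_homotopic f h]))) p
  refine ⟨MonoidHom.mk' w ?_, hn⟩
  intro p q
  induction p using Path.Homotopic.Quotient.ind with | mk γ =>
  induction q using Path.Homotopic.Quotient.ind with | mk γ' =>
  change Multiplicative.ofAdd (n (γ'.trans γ)) = Multiplicative.ofAdd (n γ + n γ')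
  refine congrArg _ (inj ?_)
  rw [← hn, logIncrement_trans, hn, hn]
  push_cast
  ring

lemma exists_loop_logIncrement_ne_zero (h : Joined x y) (γ : Path y y)
    (hγ : logIncrement f γ ≠ 0) : ∃ γ' : Path x x, logIncrement f γ' ≠ 0 := by
  obtain ⟨δ⟩ := h
  refine ⟨δ.trans (γ.trans δ.symm), ?_⟩
  rwa [logIncrement_trans, logIncrement_trans, logIncrement_symm, add_neg_cancel_comm_assoc]

end LogIncrement

section ComplexPoints

attribute [local instance] AlgHom.pointwiseTopology

open Polynomial Filter Topology unitInterval

lemma exists_polynomial_eval_eq_eval_update {ι : Type*} [DecidableEq ι] (D : MvPolynomial ι ℂ)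
    (v : ι → ℂ) (i : ι) :
    ∃ d : ℂ[X], ∀ s, d.eval s = MvPolynomial.eval (Function.update v i s) D := by
  refine ⟨MvPolynomial.aeval (Function.update (fun j => C (v j)) i X) D, fun s => ?_⟩
  rw [← coe_evalRingHom]
  simp only [MvPolynomial.aeval_def, MvPolynomial.hom_eval₂]
  have : (evalRingHom s).comp (algebraMap ℂ ℂ[X]) = RingHom.id ℂ := by
    ext; simp
  rw [this, MvPolynomial.eval₂_id]
  congr 2
  ext j
  rcases eq_or_ne j i with rfl | h <;> simp [*]

lemma AlgHom.exists_loop_of_transcendental {A : Type*} [CommRing A] [IsDomain A] [Algebra ℂ A]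
    [Algebra.FiniteType ℂ A] {f : A} (hf : IsUnit f) (htr : Transcendental ℂ f)
    (x : A →ₐ[ℂ] ℂ) : ∃ (y : A →ₐ[ℂ] ℂ) (γ : Path y y) (L : C(I, ℂ)), Joined x y ∧
      (∀ t, Complex.exp (L t) = γ t f) ∧ L 1 ≠ L 0 := by
  classical
  obtain ⟨T, hT, hTb⟩ := exists_isTranscendenceBasis_superset (R := ℂ) (s := {f})
    ((algebraicIndependent_singleton_iff (x := fun i : ({f} : Set A) => (i : A)) ⟨f, rfl⟩).2 htr)
  let i₀ : T := ⟨f, hT rfl⟩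
  let R := MvPolynomial T ℂ
  let g : R →ₐ[ℂ] A := MvPolynomial.aeval ((↑) : T → A)
  let _ : Algebra R A := g.toRingHom.toAlgebra
  have : IsScalarTower ℂ R A := .of_algHom g
  have : FaithfulSMul R A := (faithfulSMul_iff_algebraMap_injective R A).2 hTb.1
  have hgX (i : T) : algebraMap R A (.X i) = i := MvPolynomial.aeval_X _ i
  have : Algebra.IsAlgebraic R A := hTb.isAlgebraic_iff.2 fun i => by
    rw [← hgX]
    exact isAlgebraic_algebraMap _
  obtain ⟨D, hD, hfin, hlift⟩ := exists_generic_unique_lift R A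
  obtain ⟨x₁, hx₁, hxx₁⟩ := x.exists_joined_apply_ne_zero (h := algebraMap R A D)
    (by rwa [Ne, FaithfulSMul.algebraMap_eq_zero_iff])
  let π (y : A →ₐ[ℂ] ℂ) : R →ₐ[ℂ] ℂ := y.comp (IsScalarTower.toAlgHom ℂ R A)
  let v : T → ℂ := fun i => x₁ i
  let pt (s : ℂ) : R →ₐ[ℂ] ℂ := MvPolynomial.aeval (Function.update v i₀ s)
  obtain ⟨d, hd⟩ := exists_polynomial_eval_eq_eval_update D v i₀
  have hπ (y : A →ₐ[ℂ] ℂ) (s : ℂ) (h : π y = pt s) : y f = s := by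
    have h1 := AlgHom.congr_fun h (.X i₀)
    have h2 : pt s (.X i₀) = s := by simp [pt, R]
    rw [← h2, ← h1]
    exact congrArg y (hgX i₀).symm
  have hπx₁ : π x₁ = pt (x₁ f) := by
    refine MvPolynomial.algHom_ext fun i => ?_
    refine (congrArg x₁ (hgX i)).trans ((MvPolynomial.aeval_X _ i).trans ?_).symm
    have : x₁ f = v i₀ := rfl
    rw [this, Function.update_eq_self]
  have hptD (s : ℂ) : pt s D = d.eval s := (hd s).symm
  have hs₀ : x₁ f ≠ 0 := (hf.map x₁).ne_zero
  have hds₀ : d.eval (x₁ f) ≠ 0 := by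
    rw [← hptD, ← hπx₁]
    exact hx₁
  have hd0 : d ≠ 0 := by
    rintro rfl
    exact hds₀ eval_zero
  have lift (s : ℝ → ℂ) (hs : Continuous s) (hsd : ∀ t, d.eval (s t) ≠ 0) (y : A →ₐ[ℂ] ℂ)
      (hy : π y = pt (s 0)) : ∃ γ : ℝ → (A →ₐ[ℂ] ℂ), Continuous γ ∧ γ 0 = y ∧
        ∀ t, π (γ t) = pt (s t) :=
    (hlift (fun t => pt (s t))
      (continuous_aeval_pointwise (continuous_const.update i₀ hs))
      (fun t => by rw [hptD]; exact hsd t) 0 y hy).exists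
  -- move radially to a circle avoiding the roots of `d`
  obtain ⟨τ, hτ, hτball, hτcirc⟩ : ∃ τ : ℝ, 0 < τ ∧
      (∀ r ∈ Set.Icc 0 τ, d.eval ((1 + r : ℝ) * x₁ f) ≠ 0) ∧
      ∀ s : ℂ, d.eval s = 0 → ‖s‖ ≠ (1 + τ) * ‖x₁ f‖ := by
    have h1 : ∀ᶠ r : ℝ in 𝓝 0, d.eval ((1 + r : ℝ) * x₁ f) ≠ 0 := by
      have : ContinuousAt (fun r : ℝ => d.eval ((1 + r : ℝ) * x₁ f)) 0 := by
        have := d.continuous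
        fun_prop
      exact this.eventually_ne (by simpa using hds₀)
    obtain ⟨ε, hε, hε'⟩ := Metric.eventually_nhds_iff.1 h1
    have h2 : ((fun s : ℂ => ‖s‖ / ‖x₁ f‖ - 1) '' (d.roots.toFinset : Set ℂ)).Finite :=
      (Finset.finite_toSet _).image _
    obtain ⟨τ, ⟨hτ0, hτε⟩, hτ⟩ := ((Set.Ioo_infinite hε).sdiff h2).nonempty
    refine ⟨τ, hτ0, fun r hr => hε' ?_, fun s hs hsτ => hτ ⟨s, by simp [hd0, hs], ?_⟩⟩
    · rw [Real.dist_eq, sub_zero, abs_of_nonneg hr.1]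
      exact hr.2.trans_lt hτε
    · have := norm_pos_iff.2 hs₀
      simp only [hsτ]
      field_simp
      ring
  obtain ⟨γ₁, hγ₁, hγ₁0, hγ₁π⟩ := lift (fun t => ((1 + τ * Real.sin t ^ 2 : ℝ) : ℂ) * x₁ f)
    (by fun_prop) (fun t => hτball _ ⟨by positivity, by nlinarith [Real.sin_sq_le_one t]⟩) x₁
    (by simpa using hπx₁)
  let s₁ : ℂ := ((1 + τ : ℝ) : ℂ) * x₁ f
  have hs₁ : s₁ ≠ 0 := mul_ne_zero (by exact_mod_cast (by positivity)) hs₀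
  have hns₁ : ‖s₁‖ = (1 + τ) * ‖x₁ f‖ := by
    rw [norm_mul, Complex.norm_real, Real.norm_of_nonneg (by positivity)]
  obtain ⟨γ₂, hγ₂, hγ₂0, hγ₂π⟩ := lift (fun t => s₁ * Complex.exp (t * (2 * Real.pi * Complex.I)))
    (by fun_prop) (fun t h => hτcirc _ h (by
      rw [norm_mul, hns₁, ← mul_assoc, ← mul_assoc, show (t : ℂ) * 2 * Real.pi * Complex.I =
        (t * 2 * Real.pi : ℝ) * Complex.I by push_cast; ring, Complex.norm_exp_ofReal_mul_I,
        mul_one])) (γ₁ (Real.pi / 2)) (by simpa [s₁] using hγ₁π (Real.pi / 2))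
  have hγ₂n (n : ℕ) : π (γ₂ n) = pt s₁ := by
    rw [hγ₂π]
    congr 1
    have := Complex.exp_int_mul_two_pi_mul_I n
    push_cast at this ⊢
    rw [this, mul_one]
  have hfin₁ := hfin (pt s₁) (by
    rw [hptD]
    exact fun h => hτcirc _ h hns₁)
  obtain ⟨i, j, hij, hγij⟩ : ∃ i j : ℕ, i ≠ j ∧ γ₂ i = γ₂ j := by
    have : _root_.Finite {y : A →ₐ[ℂ] ℂ // π y = pt s₁} := hfin₁.to_subtype
    obtain ⟨i, j, hij, h⟩ := _root_.Finite.exists_ne_map_eq_of_infinite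
      (fun n : ℕ => (⟨γ₂ n, hγ₂n n⟩ : {y : A →ₐ[ℂ] ℂ // π y = pt s₁}))
    exact ⟨i, j, hij, congrArg Subtype.val h⟩
  have joined {γ : ℝ → (A →ₐ[ℂ] ℂ)} (hγ : Continuous γ) (r : ℝ) : Joined (γ 0) (γ r) :=
    ⟨⟨⟨fun t => γ (t * r), by fun_prop⟩, by simp, by simp⟩⟩
  refine ⟨γ₂ i, ⟨⟨fun t => γ₂ (i + t * (j - i)), by fun_prop⟩, by simp, by simp [hγij]⟩,
    ⟨fun t => Complex.log s₁ + (i + t * (j - i)) * (2 * Real.pi * Complex.I), by fun_prop⟩,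
    ?_, ?_, ?_⟩
  · have h1 := joined hγ₁ (Real.pi / 2)
    have h2 := joined hγ₂ i
    rw [hγ₁0] at h1
    rw [hγ₂0] at h2
    exact hxx₁.trans (h1.trans h2)
  · intro t
    refine Eq.trans ?_ (hπ _ _ (hγ₂π (i + t * (j - i)))).symm
    simp only [ContinuousMap.coe_mk]
    rw [Complex.exp_add, Complex.exp_log hs₁]
    push_cast
    rfl
  · have := Complex.two_pi_I_ne_zero
    have hij' : (j : ℂ) - i ≠ 0 := sub_ne_zero.2 (by exact_mod_cast hij.symm)
    simpa [sub_eq_zero] using And.intro hij' this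

end ComplexPoints

open IsDedekindDomain in
/-- The places of a finite separable extension over a discrete valuation ring, assembled into a
single homomorphism on units. -/
lemma IsDiscreteValuationRing.exists_units_hom (O F K : Type*) [CommRing O] [IsDomain O]
    [IsDiscreteValuationRing O] [Field F] [Field K] [Algebra O F] [IsFractionRing O F]
    [Algebra F K] [Algebra O K] [IsScalarTower O F K] [FiniteDimensional F K]
    [Algebra.IsSeparable F K] :
    ∃ (n : ℕ) (φ : Kˣ →* (Fin n → Multiplicative ℤ)),
      ∀ x, φ x = 1 → IsIntegral O (x : K) := by
  let B := integralClosure O K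
  have : IsDedekindDomain B := integralClosure.isDedekindDomain O F K
  have : IsFractionRing B K := integralClosure.isFractionRing_of_finite_extension F K
  have : FaithfulSMul O K := .trans O F K
  have : FaithfulSMul O B := .tower_bot O B K
  have hfin : Finite (HeightOneSpectrum B) := by
    have := (IsDedekindDomain.primesOver_finite (IsLocalRing.maximalIdeal O) B).to_subtype
    refine Finite.of_injective (β := (IsLocalRing.maximalIdeal O).primesOver B)
      (fun v => ⟨v.asIdeal, v.isPrime, ⟨?_⟩⟩) fun v w h => HeightOneSpectrum.ext
        (congrArg Subtype.val h)
    have := v.isMaximal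
    exact (IsLocalRing.eq_maximalIdeal (Ideal.isMaximal_comap_of_isIntegral_of_isMaximal
      v.asIdeal)).symm
  obtain ⟨n, ⟨e⟩⟩ := Finite.exists_equiv_fin (HeightOneSpectrum B)
  refine ⟨n, MonoidHom.pi fun i => (e.symm i).valuationOfNeZero, fun x hx => ?_⟩
  obtain ⟨b, hb⟩ := HeightOneSpectrum.mem_integers_of_valuation_le_one (R := B) K (x : K)
      fun v => by
    rw [← HeightOneSpectrum.valuationOfNeZero_eq]
    have h := congrFun hx (e v)
    have : v.valuationOfNeZero x = 1 := by simpa using h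
    rw [this]
    rfl
  rw [← hb]
  exact b.2

/-- The valuation `p ↦ exp (deg p)` given by the total degree. -/
noncomputable def MvPolynomial.degreeValuation (σ k : Type*) [Field k] :
    Valuation (MvPolynomial σ k) (WithZero (Multiplicative ℤ)) where
  toFun p := open Classical in if p = 0 then 0 else WithZero.exp (p.totalDegree : ℤ)
  map_zero' := by simp
  map_one' := by simp
  map_mul' p q := by
    by_cases hp : p = 0
    · simp [hp]
    by_cases hq : q = 0
    · simp [hq]
    simp [hp, hq, MvPolynomial.totalDegree_mul_of_isDomain, WithZero.exp_add]
  map_add_le_max' p q := by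
    by_cases hpq : p + q = 0
    · simp [hpq]
    by_cases hp : p = 0
    · rw [hp, zero_add]
      exact le_max_right _ _
    by_cases hq : q = 0
    · rw [hq, add_zero]
      exact le_max_left _ _
    simp only [hpq, hp, hq, if_false, le_max_iff, WithZero.exp_le_exp, Nat.cast_le]
    exact le_max_iff.1 (MvPolynomial.totalDegree_add p q)

lemma MvPolynomial.degreeValuation_apply {σ k : Type*} [Field k] {p : MvPolynomial σ k}
    (hp : p ≠ 0) : degreeValuation σ k p = WithZero.exp (p.totalDegree : ℤ) :=
  if_neg hp

lemma MvPolynomial.eq_C_of_degreeValuation_le_one {σ k : Type*} [Field k] {p : MvPolynomial σ k}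
    (hp : degreeValuation σ k p ≤ 1) : p = C (coeff 0 p) := by
  rcases eq_or_ne p 0 with rfl | h0
  · simp
  rw [degreeValuation_apply h0, ← WithZero.exp_zero, WithZero.exp_le_exp] at hp
  exact totalDegree_eq_zero_iff_eq_C.1 (by omega)

open nonZeroDivisors in
/-- Over a polynomial ring in at least one variable, the units of a finite integral extension embed
in a finitely generated free abelian group up to elements algebraic over the base field. -/
lemma exists_units_hom_of_finite_mvPolynomial {σ k A : Type*} [Field k] [CharZero k] [Nonempty σ]
    [CommRing A] [IsDomain A] [Algebra k A] [Algebra (MvPolynomial σ k) A]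
    [IsScalarTower k (MvPolynomial σ k) A] [FaithfulSMul (MvPolynomial σ k) A]
    [Module.Finite (MvPolynomial σ k) A] :
    ∃ (n : ℕ) (φ : Aˣ →* (Fin n → Multiplicative ℤ)), ∀ x, φ x = 1 → IsIntegral k (x : A) := by
  let R := MvPolynomial σ k
  let F := FractionRing R
  let K := FractionRing A
  let _ : Algebra F K := FractionRing.liftAlgebra R K
  have : IsScalarTower R F K := FractionRing.isScalarTower_liftAlgebra R K
  have : CharZero F := charZero_of_injective_algebraMap (IsFractionRing.injective R F)
  have : Module.Finite F K := .of_isLocalization R A R⁰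
  obtain ⟨v, hv⟩ : ∃ v : Valuation F (WithZero (Multiplicative ℤ)),
      ∀ p : R, v (algebraMap R F p) = MvPolynomial.degreeValuation σ k p :=
    ⟨(MvPolynomial.degreeValuation σ k).extendToLocalization (S := R⁰) (fun p hp => by
      change MvPolynomial.degreeValuation σ k p ≠ 0
      simp [MvPolynomial.degreeValuation_apply (nonZeroDivisors.ne_zero hp)]) F,
      Valuation.extendToLocalization_apply_map_apply _ _ _⟩
  have hcyc : IsCyclic (MonoidWithZeroHom.valueGroup (.ofClass v)) := inferInstance
  have hnt : Nontrivial (MonoidWithZeroHom.valueGroup (.ofClass v)) := by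
    obtain ⟨i⟩ := ‹Nonempty σ›
    have : v (algebraMap R F (.X i)) = WithZero.exp 1 := by
      rw [hv, MvPolynomial.degreeValuation_apply (MvPolynomial.X_ne_zero i)]
      simp
    have h1 : (Units.mk0 (WithZero.exp (1 : ℤ)) WithZero.exp_ne_zero) ∈
        MonoidWithZeroHom.valueGroup (.ofClass v) :=
      MonoidWithZeroHom.mem_valueGroup _ ⟨_, this⟩
    refine ⟨⟨_, h1⟩, 1, fun h => ?_⟩
    have h2 := congrArg Units.val (congrArg Subtype.val h)
    rw [Units.val_mk0] at h2
    exact absurd (WithZero.exp_inj.1 (h2.trans WithZero.exp_zero.symm)) one_ne_zero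
  let O := v.valuationSubring
  let _ : Algebra O K := ((algebraMap F K).comp (algebraMap O F)).toAlgebra
  have : IsScalarTower O F K := .of_algebraMap_eq fun _ => rfl
  have : IsDiscreteValuationRing O := v.valuationSubring_isDiscreteValuationRing
  obtain ⟨n, φ, hφ⟩ := IsDiscreteValuationRing.exists_units_hom O F K
  refine ⟨n, φ.comp (Units.map (algebraMap A K)), fun x hx => ?_⟩
  have h1 : IsIntegral O (algebraMap A K x) := hφ _ hx
  have h2 : IsIntegral R (x : A) := Algebra.IsIntegral.isIntegral _
  have h3 := minpoly.isIntegrallyClosed_eq_field_fractions F K h2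
  have h4 := minpoly.isIntegrallyClosed_eq_field_fractions' F h1
  have h5 : ∃ q : Polynomial k, q.map (algebraMap k R) = minpoly R (x : A) := by
    rw [← Polynomial.mem_lifts, Polynomial.lifts_iff_coeff_lifts]
    intro i
    refine ⟨_, (MvPolynomial.eq_C_of_degreeValuation_le_one ?_).symm⟩
    rw [← hv, ← Polynomial.coeff_map, ← h3, h4, Polynomial.coeff_map]
    exact ((minpoly O (algebraMap A K x)).coeff i).2
  obtain ⟨q, hq, hdeg, hmon⟩ :=
    Polynomial.lifts_and_degree_eq_and_monic (Polynomial.mem_lifts _ |>.2 h5) (minpoly.monic h2)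
  refine ⟨q, hmon, ?_⟩
  rw [IsScalarTower.algebraMap_eq k R A, ← Polynomial.eval₂_map, hq]
  exact minpoly.aeval R (x : A)

/-- The units of a finitely generated domain embed in a finitely generated free abelian group up to
elements algebraic over the base field. -/
lemma Algebra.FiniteType.exists_units_hom (k A : Type*) [Field k] [CharZero k] [CommRing A]
    [IsDomain A] [Algebra k A] [Algebra.FiniteType k A] :
    ∃ (n : ℕ) (φ : Aˣ →* (Fin n → Multiplicative ℤ)), ∀ x, φ x = 1 → IsIntegral k (x : A) := by
  obtain ⟨s, g, hg, hfin⟩ := exists_finite_inj_algHom_of_fg k A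
  let _ : Algebra (MvPolynomial (Fin s) k) A := g.toRingHom.toAlgebra
  have : IsScalarTower k (MvPolynomial (Fin s) k) A := .of_algHom g
  have : FaithfulSMul (MvPolynomial (Fin s) k) A := (faithfulSMul_iff_algebraMap_injective _ _).2 hg
  have : Module.Finite (MvPolynomial (Fin s) k) A := hfin
  rcases isEmpty_or_nonempty (Fin s) with h | h
  · refine ⟨0, 1, fun x _ => ?_⟩
    have : Algebra.IsIntegral k (MvPolynomial (Fin s) k) :=
      Algebra.isIntegral_of_surjective (MvPolynomial.C_surjective _)
    exact isIntegral_trans _ (Algebra.IsIntegral.isIntegral (R := MvPolynomial (Fin s) k) _)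
  · exact exists_units_hom_of_finite_mvPolynomial (σ := Fin s)

lemma IsAlgClosed.mem_range_algebraMap_of_isIntegral {k A : Type*} [Field k] [IsAlgClosed k]
    [CommRing A] [IsDomain A] [Algebra k A] {x : A} (hx : IsIntegral k x) :
    x ∈ (algebraMap k A).range :=
  minpoly.mem_range_of_degree_eq_one k x
    (IsAlgClosed.degree_eq_one_of_irreducible k (minpoly.irreducible hx))

lemma MonoidHom.map_eq_one_of_forall_exists_pow_eq {G : Type*} [Group G]
    (hG : ∀ (n : ℕ) (g : G), n ≠ 0 → ∃ h, h ^ n = g) (φ : G →* Multiplicative ℤ) (g : G) :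
    φ g = 1 := by
  obtain ⟨h, hh⟩ := hG ((φ g).toAdd.natAbs + 1) g (Nat.succ_ne_zero _)
  have h1 : (φ g).toAdd = ((φ g).toAdd.natAbs + 1 : ℕ) * (φ h).toAdd := by
    conv_lhs => rw [← hh]
    simp
  have h2 : (((φ g).toAdd.natAbs + 1 : ℕ) : ℤ) ∣ (φ g).toAdd := ⟨_, h1⟩
  refine Multiplicative.toAdd.injective (Int.eq_zero_of_abs_lt_dvd h2 ?_)
  push_cast
  omega

/-- A commutative group with a homomorphism to a finitely generated free abelian group splits as
the product of the kernel and a finitely generated free abelian group. -/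
lemma MonoidHom.exists_mulEquiv_prod {C U : Type*} [CommGroup C] [CommGroup U] {n : ℕ} (j : C →* U)
    (hj : Function.Injective j) (φ : U →* (Fin n → Multiplicative ℤ)) (h : φ.ker = j.range) :
    ∃ (m : ℕ) (e : C × Multiplicative (Fin m → ℤ) ≃* U), ∀ c, e (c, 1) = j c := by
  let ψ : Additive U →+ (Fin n → ℤ) :=
    { toFun u i := (φ u.toMul i).toAdd
      map_zero' := by ext; simp
      map_add' _ _ := by ext; simp }
  have hψ (u : U) : ψ (.ofMul u) = 0 ↔ u ∈ j.range := by
    rw [← h, MonoidHom.mem_ker, funext_iff, funext_iff]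
    rfl
  let N := LinearMap.range ψ.toIntLinearMap
  let b := Module.finBasis ℤ N
  have hs (i) : ∃ u : Additive U, ψ u = b i := (b i).2
  choose u hu using hs
  let σ : (Fin (Module.finrank ℤ N) → ℤ) →ₗ[ℤ] Additive U := Fintype.linearCombination ℤ u
  have hσ (a) : ψ (σ a) = b.equivFun.symm a := by
    simp [σ, Fintype.linearCombination_apply, hu, Module.Basis.equivFun_symm_apply]
  let τ : Multiplicative (Fin (Module.finrank ℤ N) → ℤ) →* U :=
    AddMonoidHom.toMultiplicativeLeft σ.toAddMonoidHom
  have hτ (a) : ψ (.ofMul (τ a)) = b.equivFun.symm a.toAdd := hσ a.toAdd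
  have hbij : Function.Bijective (j.coprod τ) := by
    constructor
    · rw [injective_iff_map_eq_one]
      rintro ⟨c, a⟩ hca
      rw [MonoidHom.coprod_apply] at hca
      have h1 : ψ (.ofMul (j c * τ a)) = 0 := by rw [hca, ofMul_one, map_zero]
      rw [ofMul_mul, map_add, (hψ _).2 ⟨c, rfl⟩, zero_add, hτ, ZeroMemClass.coe_eq_zero,
        LinearEquiv.map_eq_zero_iff] at h1
      obtain rfl : a = 1 := h1
      rw [map_one, mul_one, ← map_one j] at hca
      obtain rfl : c = 1 := hj hca
      rfl
    · intro x
      let a := b.equivFun ⟨ψ (.ofMul x), _, rfl⟩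
      obtain ⟨c, hc⟩ := (hψ (x / τ (.ofAdd a))).1 (by
        rw [ofMul_div, map_sub, hτ, toAdd_ofAdd, LinearEquiv.symm_apply_apply, sub_self])
      exact ⟨(c, .ofAdd a), by rw [MonoidHom.coprod_apply, hc, div_mul_cancel]⟩
  refine ⟨Module.finrank ℤ N, MulEquiv.ofBijective _ hbij, fun c => ?_⟩
  rw [MulEquiv.ofBijective_apply, MonoidHom.coprod_apply, map_one, mul_one]

/-- The units of a finitely generated domain over an algebraically closed field of characteristic
zero. -/
lemma Algebra.FiniteType.exists_units_mulEquiv (k A : Type*) [Field k] [CharZero k] [IsAlgClosed k]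
    [CommRing A] [IsDomain A] [Algebra k A] [Algebra.FiniteType k A] :
    ∃ (m : ℕ) (e : kˣ × Multiplicative (Fin m → ℤ) ≃* Aˣ),
      ∀ c, e (c, 1) = Units.map (algebraMap k A) c := by
  obtain ⟨n, φ, hφ⟩ := exists_units_hom k A
  refine MonoidHom.exists_mulEquiv_prod (Units.map (algebraMap k A : k →* A))
    (Units.map_injective (algebraMap k A).injective) φ (le_antisymm (fun x hx => ?_) ?_)
  · obtain ⟨c, hc⟩ := IsAlgClosed.mem_range_algebraMap_of_isIntegral (hφ x hx)
    have hc0 : c ≠ 0 := by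
      rintro rfl
      exact x.ne_zero (by rw [← hc, map_zero])
    exact ⟨.mk0 c hc0, Units.ext hc⟩
  · rintro _ ⟨c, rfl⟩
    refine funext fun i => MonoidHom.map_eq_one_of_forall_exists_pow_eq (fun n g hn => ?_)
      (((Pi.evalMonoidHom _ i).comp φ).comp (Units.map (algebraMap k A : k →* A))) c
    obtain ⟨z, hz⟩ := IsAlgClosed.exists_pow_nat_eq (g : k) (Nat.pos_of_ne_zero hn)
    have hz0 : z ≠ 0 := by
      rintro rfl
      exact g.ne_zero (by rw [← hz, zero_pow hn])
    exact ⟨.mk0 z hz0, Units.ext (by simpa using hz)⟩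

lemma LinearMap.finrank_le_rank_of_flip_injective {R M H : Type*} [CommRing R] [IsDomain R]
    [IsPrincipalIdealRing R] [AddCommGroup M] [Module R M] [Module.Finite R M] [Module.Free R M]
    [AddCommGroup H] [Module R H] (W : H →ₗ[R] M →ₗ[R] R)
    (hW : Function.Injective W.flip) : (Module.finrank R M : Cardinal) ≤ Module.rank R H := by
  let N := LinearMap.range W
  have : Module.Free R N :=
    .of_basis (Submodule.basisOfPid (Module.Free.chooseBasis R (M →ₗ[R] R)) N).2
  have : Module.Finite R (N →ₗ[R] R) := inferInstance
  have h1 : Module.finrank R M ≤ Module.finrank R (N →ₗ[R] R) := by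
    refine LinearMap.finrank_le_finrank_of_injective (f := N.subtype.flip) fun a b hab => hW ?_
    ext h
    exact LinearMap.congr_fun hab ⟨W h, h, rfl⟩
  rw [Module.finrank_linearMap_self R R N] at h1
  have h2 : (Module.finrank R N : Cardinal) = Module.rank R N := Module.finrank_eq_rank R N
  have h3 := lift_rank_range_le W
  rw [← h2, Cardinal.lift_natCast, Cardinal.nat_le_lift_iff] at h3
  exact le_trans (by exact_mod_cast h1) h3

section ComplexPoints

attribute [local instance] AlgHom.pointwiseTopology

/-- A unit of a `ℂ`-algebra as a nowhere vanishing function on its complex points. -/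
def AlgHom.evalUnit {A : Type*} [CommRing A] [Algebra ℂ A] (u : Aˣ) :
    C(A →ₐ[ℂ] ℂ, {z : ℂ // z ≠ 0}) where
  toFun x := ⟨x u, (u.isUnit.map x).ne_zero⟩
  continuous_toFun := (AlgHom.continuous_pointwise_iff.1 continuous_id (u : A)).subtype_mk _

/-- The winding numbers of the units around the loops at a point. -/
lemma AlgHom.exists_windingPairing {A : Type*} [CommRing A] [Algebra ℂ A] (x : A →ₐ[ℂ] ℂ) :
    ∃ W : Additive (Abelianization (FundamentalGroup (A →ₐ[ℂ] ℂ) x)) →ₗ[ℤ] Additive Aˣ →ₗ[ℤ] ℤ,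
      ∀ (γ : Path x x) (u : Aˣ), logIncrement (evalUnit u) γ =
        W (.ofMul (.of (.mk γ))) (.ofMul u) * (2 * Real.pi * Complex.I) := by
  choose w hw using fun u : Aˣ => exists_windingNumber_hom (evalUnit u) x
  let w' (u : Aˣ) : Additive (Abelianization (FundamentalGroup (A →ₐ[ℂ] ℂ) x)) →ₗ[ℤ] ℤ :=
    (AddMonoidHom.toMultiplicativeRight.symm (Abelianization.lift (w u))).toIntLinearMap
  have hmul (u v : Aˣ) : w' (u * v) = w' u + w' v := by
    ext p
    obtain ⟨p, rfl⟩ := Additive.ofMul.surjective p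
    obtain ⟨p, rfl⟩ := QuotientGroup.mk_surjective p
    obtain ⟨γ, rfl⟩ := Path.Homotopic.Quotient.mk_surjective p
    have h := logIncrement_mul (evalUnit u) (evalUnit v) (evalUnit (u * v))
      (fun y => map_mul y (u : A) v) γ
    rw [hw, hw, hw, ← add_mul] at h
    change (w (u * v) (.mk γ)).toAdd = (w u (.mk γ)).toAdd + (w v (.mk γ)).toAdd
    exact_mod_cast mul_right_cancel₀ Complex.two_pi_I_ne_zero h
  let V : Additive Aˣ →+ (Additive (Abelianization (FundamentalGroup (A →ₐ[ℂ] ℂ) x)) →ₗ[ℤ] ℤ) :=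
    .mk' (fun u => w' u.toMul) fun u v => hmul u.toMul v.toMul
  exact ⟨V.toIntLinearMap.flip, fun γ u => hw u γ⟩

/-- A unit which is not constant has a non-trivial winding number. -/
lemma AlgHom.exists_loop_logIncrement_ne_zero {A : Type*} [CommRing A] [IsDomain A] [Algebra ℂ A]
    [Algebra.FiniteType ℂ A] (u : Aˣ) (hu : (u : A) ∉ (algebraMap ℂ A).range) (x : A →ₐ[ℂ] ℂ) :
    ∃ γ : Path x x, logIncrement (evalUnit u) γ ≠ 0 := by
  have htr : Transcendental ℂ (u : A) := fun h =>
    hu (IsAlgClosed.mem_range_algebraMap_of_isIntegral h.isIntegral)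
  obtain ⟨y, γ, L, hxy, hL, hne⟩ := exists_loop_of_transcendental u.isUnit htr x
  refine _root_.exists_loop_logIncrement_ne_zero _ hxy γ ?_
  rwa [logIncrement_eq L hL, sub_ne_zero]

end ComplexPoints

/-- **Samuel's Lemma.** For an irreducible complex affine variety `X` (with coordinate
ring `A`, a finitely generated integral `ℂ`-algebra), the group of units `O(X)^× = Aˣ`
is isomorphic to `ℂ* × ℤ^m` for some `m ≥ 0`; moreover `m` is at most the rank of
`H¹(X, ℤ)`, expressed here as the rank of the abelianized fundamental group of the
space `X = Hom_{ℂ-alg}(A, ℂ)` of complex points with its natural (euclidean) topology. -/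
theorem samuel_lemma (A : Type) [CommRing A] [IsDomain A] [Algebra ℂ A]
    [Algebra.FiniteType ℂ A] :
    ∃ m : ℕ, Nonempty (Aˣ ≃* ℂˣ × Multiplicative (Fin m → ℤ)) ∧
      (letI : TopologicalSpace (A →ₐ[ℂ] ℂ) :=
        TopologicalSpace.induced (fun φ : A →ₐ[ℂ] ℂ => (φ : A → ℂ)) inferInstance
      ∀ x : A →ₐ[ℂ] ℂ,
        (m : Cardinal) ≤
          Module.rank ℤ (Additive (Abelianization (FundamentalGroup (A →ₐ[ℂ] ℂ) x)))) := by
  obtain ⟨m, e, he⟩ := Algebra.FiniteType.exists_units_mulEquiv ℂ A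
  refine ⟨m, ⟨e.symm⟩, fun x => ?_⟩
  let _ : TopologicalSpace (A →ₐ[ℂ] ℂ) := AlgHom.pointwiseTopology A
  obtain ⟨W, hW⟩ := AlgHom.exists_windingPairing x
  let ν : (Fin m → ℤ) →ₗ[ℤ] Additive Aˣ :=
    (AddMonoidHom.toMultiplicativeLeft.symm (e.toMonoidHom.comp (MonoidHom.inr _ _))).toIntLinearMap
  have hν (a) : ν a = .ofMul (e (1, .ofAdd a)) := rfl
  have h := LinearMap.finrank_le_rank_of_flip_injective (W.compl₂ ν) <| by
    rw [injective_iff_map_eq_zero]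
    intro a ha
    by_contra h0
    obtain ⟨γ, hγ⟩ := AlgHom.exists_loop_logIncrement_ne_zero (e (1, .ofAdd a)) (by
      rintro ⟨c, hc⟩
      have hc0 : c ≠ 0 := by
        rintro rfl
        exact (e (1, .ofAdd a)).ne_zero (by rw [← hc, map_zero])
      have h1 : e (.mk0 c hc0, 1) = e (1, .ofAdd a) := (he _).trans (Units.ext hc)
      exact h0 (congrArg Prod.snd (e.injective h1)).symm) x
    refine hγ ?_
    rw [hW, ← hν]
    have : W (.ofMul (.of (.mk γ))) (ν a) = 0 := LinearMap.congr_fun ha _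
    rw [this, Int.cast_zero, zero_mul]
  rwa [Module.finrank_fin_fun] at h
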